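/- Let 865/886 < γ < 1, a ∈ ℤ \ {0}, 1 < c < 3 with c ≠ 2 be fixed and let ε > 0 be sufficiently small. Set θ = (443/55)γ − 173/22 − ε, and suppose X^{1−ε} ≤ N ≤ X, H = N^{1−γ+ε}, N^θ ≤ D ≤ N^{θ+ε/2}, and |t| ≤ X^{1/4−c}. Let (a(m)) be complex numbers with |a(m)| ≤ 1, let b(l) = 1 for all l or b(l) = log l for all l, and let c(d,h) be complex numbers with |c(d,h)| = 1. Define S_I = Σ_{m ∼ M} Σ_{l : N < ml ≤ 2N} a(m) b(l) G(ml), where G(n) = Σ_{1 ≤ h ≤ H} F_h(n) e(t n^c − h n^γ) and F_h(n) = Σ_{d ≤ D, gcd(d,a)=1, d | n−a} c(d,h). If M ≪ N^{(31/3)γ − 19/2 − θ − ε}, then S_I ≪ N^{1−ε}. -/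

import Mathlib

/-- `e(t) = exp(2πit)`. -/
noncomputable def e (t : ℝ) : ℂ := Complex.exp (2 * Real.pi * Complex.I * t)

lemma e_add (x y : ℝ) : e (x + y) = e x * e y := by
  unfold e; rw [← Complex.exp_add]; congr 1; push_cast; ring

lemma norm_e (x : ℝ) : ‖e x‖ = 1 := by
  unfold e
  have : (2 * Real.pi * Complex.I * x : ℂ) = ((2 * Real.pi * x : ℝ) : ℂ) * Complex.I := by
    push_cast; ring
  rw [this, Complex.norm_exp_ofReal_mul_I]

lemma conj_e (x : ℝ) : (starRingEnd ℂ) (e x) = e (-x) := by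
  unfold e
  rw [← Complex.exp_conj]; congr 1
  simp only [map_mul, Complex.conj_I, Complex.conj_ofReal, Complex.ofReal_neg, map_ofNat]
  ring

lemma e_eq (x : ℝ) : e x = (Real.cos (2 * (Real.pi * x)) : ℂ)
    + (Real.sin (2 * (Real.pi * x)) : ℂ) * Complex.I := by
  unfold e
  have : (2 * Real.pi * Complex.I * x : ℂ) = ((2 * (Real.pi * x) : ℝ) : ℂ) * Complex.I := by
    push_cast; ring
  rw [this, Complex.exp_mul_I, Complex.ofReal_cos, Complex.ofReal_sin]

/-- the weight `1/(1-e(g))` -/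
noncomputable def kw (g : ℝ) : ℂ :=
  (1 + ((Real.cos (Real.pi * g) / Real.sin (Real.pi * g) : ℝ) : ℂ) * Complex.I) / 2

lemma kw_mul (g : ℝ) (h : Real.sin (Real.pi * g) ≠ 0) : kw g * (1 - e g) = 1 := by
  rw [e_eq, Real.cos_two_mul, Real.sin_two_mul, kw]
  have h2 := Real.sin_sq_add_cos_sq (Real.pi * g)
  set s := Real.sin (Real.pi * g)
  set k := Real.cos (Real.pi * g)
  have hs : (s : ℂ) ≠ 0 := by exact_mod_cast h
  have h3 : (s : ℂ) ^ 2 + (k : ℂ) ^ 2 = 1 := by exact_mod_cast h2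
  have hI := Complex.I_sq
  push_cast
  field_simp
  linear_combination (-2 * (k : ℂ) * Complex.I) * h3 - 2 * (s : ℂ) * (k : ℂ) ^ 2 * hI

lemma sin_lb {g Δ : ℝ} (hΔ : 0 < Δ) (h1 : Δ ≤ g) (h2 : g ≤ 1 - Δ) :
    2 * Δ ≤ Real.sin (Real.pi * g) := by
  have hp := Real.pi_pos
  rcases le_total g (1/2) with h | h
  · have := Real.mul_le_sin (x := Real.pi * g) (mul_nonneg hp.le (by linarith)) (by nlinarith)
    have h3 : 2 / Real.pi * (Real.pi * g) = 2 * g := by field_simp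
    rw [h3] at this; linarith
  · have := Real.mul_le_sin (x := Real.pi * (1 - g)) (mul_nonneg hp.le (by linarith)) (by nlinarith)
    have h3 : 2 / Real.pi * (Real.pi * (1 - g)) = 2 * (1 - g) := by field_simp
    rw [h3] at this
    have h4 : Real.sin (Real.pi * (1 - g)) = Real.sin (Real.pi * g) := by
      rw [mul_sub, mul_one, Real.sin_pi_sub]
    rw [h4] at this; linarith

lemma kw_norm {g Δ : ℝ} (hΔ : 0 < Δ) (h1 : Δ ≤ g) (h2 : g ≤ 1 - Δ) : ‖kw g‖ ≤ 1 / (4 * Δ) := by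
  have hs := sin_lb hΔ h1 h2
  have h := kw_mul g (by linarith)
  have h3 : ‖(1 - e g)‖ = 2 * Real.sin (Real.pi * g) := by
    have h4 : ‖(1 - e g)‖ ^ 2 = (2 * Real.sin (Real.pi * g)) ^ 2 := by
      rw [← Complex.normSq_eq_norm_sq, e_eq, Complex.normSq_apply]
      simp only [Complex.sub_re, Complex.add_re, Complex.one_re, Complex.ofReal_re, Complex.mul_re,
        Complex.I_re, Complex.I_im, Complex.ofReal_im, Complex.sub_im, Complex.add_im,
        Complex.one_im, Complex.mul_im]
      rw [Real.cos_two_mul, Real.sin_two_mul]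
      have h2 := Real.sin_sq_add_cos_sq (Real.pi * g)
      set s := Real.sin (Real.pi * g)
      set k := Real.cos (Real.pi * g)
      have : k^2 = 1 - s^2 := by linarith
      ring_nf
      rw [show k^4 = (k^2)^2 by ring, this]; ring
    exact (pow_left_inj₀ (norm_nonneg _) (by linarith) two_ne_zero).1 h4
  have h5 : ‖kw g‖ * (2 * Real.sin (Real.pi * g)) = 1 := by
    rw [← h3, ← norm_mul, h, norm_one]
  rw [le_div_iff₀ (by positivity)]
  nlinarith [norm_nonneg (kw g)]

lemma kw_diff {u v : ℝ} (hu : 0 < u) (huv : u ≤ v) (hv : v < 1) :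
    ‖kw v - kw u‖ = (Real.cos (Real.pi * u) / Real.sin (Real.pi * u)
      - Real.cos (Real.pi * v) / Real.sin (Real.pi * v)) / 2 := by
  have hp := Real.pi_pos
  have hsu : 0 < Real.sin (Real.pi * u) := Real.sin_pos_of_pos_of_lt_pi (by positivity) (by nlinarith)
  have hsv : 0 < Real.sin (Real.pi * v) :=
    Real.sin_pos_of_pos_of_lt_pi (mul_pos hp (by linarith)) (by nlinarith)
  have h1 : kw v - kw u = ((-((Real.cos (Real.pi * u) / Real.sin (Real.pi * u)
      - Real.cos (Real.pi * v) / Real.sin (Real.pi * v)) / 2) : ℝ) : ℂ) * Complex.I := by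
    unfold kw; push_cast; ring
  rw [h1, norm_mul, Complex.norm_I, mul_one, Complex.norm_real, Real.norm_eq_abs, abs_neg,
    abs_of_nonneg]
  have h3 : 0 ≤ Real.sin (Real.pi * v - Real.pi * u) :=
    Real.sin_nonneg_of_nonneg_of_le_pi (by nlinarith) (by nlinarith)
  rw [Real.sin_sub] at h3
  have : Real.cos (Real.pi * u) / Real.sin (Real.pi * u)
      - Real.cos (Real.pi * v) / Real.sin (Real.pi * v) =
      (Real.sin (Real.pi * v) * Real.cos (Real.pi * u) - Real.cos (Real.pi * v) * Real.sin (Real.pi * u))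
        / (Real.sin (Real.pi * u) * Real.sin (Real.pi * v)) := by field_simp
  rw [this]; positivity

lemma e_int_sub (x : ℝ) (ν : ℤ) : e (x - ν) = e x := by
  unfold e
  have : (2 * Real.pi * Complex.I * ((x - ν : ℝ) : ℂ) : ℂ)
     = 2 * Real.pi * Complex.I * x - ν * (2 * Real.pi * Complex.I) := by
    push_cast; ring
  rw [this, Complex.exp_sub, Complex.exp_int_mul_two_pi_mul_I, div_one]

/-- Kusmin–Landau -/
lemma KL (x : ℕ → ℝ) (L : ℕ) (Δ : ℝ) (ν : ℤ) (hΔ : 0 < Δ)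
    (hm : ∀ n, n + 1 < L → x (n+1) - x n ≤ x (n+2) - x (n+1))
    (hl : ∀ n, n < L → ν + Δ ≤ x (n+1) - x n)
    (hu : ∀ n, n < L → x (n+1) - x n ≤ ν + 1 - Δ) :
    ‖∑ n ∈ Finset.range L, e (x n)‖ ≤ 1 / Δ := by
  rcases L with _ | L
  · simp; positivity
  set g : ℕ → ℝ := fun n => x (n+1) - x n - ν with hg
  have g1 : ∀ n, n < L + 1 → Δ ≤ g n := fun n hn => by have := hl n hn; simp only [hg]; linarith
  have g2 : ∀ n, n < L + 1 → g n ≤ 1 - Δ := fun n hn => by have := hu n hn; simp only [hg]; linarith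
  have key : ∀ n, n < L + 1 → e (x n) = kw (g n) * (e (x n) - e (x (n+1))) := by
    intro n hn
    have h1 : e (x (n+1)) = e (x n) * e (g n) := by
      simp only [hg]
      rw [e_int_sub, ← e_add]; congr 1; ring
    have h2 := kw_mul (g n) (by have := sin_lb hΔ (g1 n hn) (g2 n hn); linarith)
    rw [h1]
    linear_combination (-e (x n)) * h2
  set ct : ℝ → ℝ := fun u => Real.cos (Real.pi * u) / Real.sin (Real.pi * u) with hct
  have ind : ∀ k, k < L + 1 → ‖∑ n ∈ Finset.range (k+1), e (x n) - kw (g 0) * e (x 0)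
      + kw (g k) * e (x (k+1))‖ ≤ (ct (g 0) - ct (g k)) / 2 := by
    intro k
    induction k with
    | zero =>
      intro hk
      have := key 0 hk
      simp only [zero_add, Finset.sum_range_one, sub_self, zero_div]
      have h0 : e (x 0) - kw (g 0) * e (x 0) + kw (g 0) * e (x 1) = 0 := by
        simp only [zero_add] at this
        linear_combination this
      rw [h0, norm_zero]
    | succ k ih =>
      intro hk
      have ih' := ih (by omega)
      have hk1 := key (k+1) hk
      rw [Finset.sum_range_succ]
      have : ∑ n ∈ Finset.range (k+1), e (x n) + e (x (k+1)) - kw (g 0) * e (x 0)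
          + kw (g (k+1)) * e (x (k+1+1)) =
          (∑ n ∈ Finset.range (k+1), e (x n) - kw (g 0) * e (x 0)
      + kw (g k) * e (x (k+1))) + (kw (g (k+1)) - kw (g k)) * e (x (k+1)) := by
        linear_combination hk1
      rw [this]
      refine (norm_add_le _ _).trans ?_
      rw [norm_mul, norm_e, mul_one, kw_diff (by linarith [g1 k (by omega)])
        (by have := hm k hk; simp only [hg]; linarith) (by linarith [g2 (k+1) hk])]
      simp only [hct] at ih' ⊢
      linarith
  have hfin := ind L (by omega)
  have ctb : ∀ n, n < L + 1 → |ct (g n)| ≤ 1 / (2 * Δ) := by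
    intro n hn
    have hs := sin_lb hΔ (g1 n hn) (g2 n hn)
    simp only [hct]
    rw [abs_div, abs_of_pos (show 0 < Real.sin (Real.pi * g n) by linarith)]
    exact div_le_div₀ zero_le_one (Real.abs_cos_le_one _) (by positivity) hs
  have c0 := abs_le.1 (ctb 0 (by omega))
  have c1 := abs_le.1 (ctb L (by omega))
  have n0 := kw_norm hΔ (g1 0 (by omega)) (g2 0 (by omega))
  have n1 := kw_norm hΔ (g1 L (by omega)) (g2 L (by omega))
  have : ∑ n ∈ Finset.range (L+1), e (x n) = (∑ n ∈ Finset.range (L+1), e (x n) - kw (g 0) * e (x 0)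
      + kw (g L) * e (x (L+1))) + kw (g 0) * e (x 0) - kw (g L) * e (x (L+1)) := by ring
  rw [this]
  refine (norm_sub_le _ _).trans ?_
  refine (add_le_add_left (norm_add_le _ _) _).trans ?_
  rw [norm_mul, norm_mul, norm_e, norm_e]
  have e1 : 1 / (4 * Δ) = (1 / Δ) / 4 := by field_simp
  have e2 : 1 / (2 * Δ) = (1 / Δ) / 2 := by field_simp
  rw [e1] at n0 n1; rw [e2] at c0 c1
  linarith

lemma thresh (p : ℕ → Prop) (L : ℕ) (hp : ∀ n, n + 1 < L → p (n+1) → p n) :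
    ∃ j ≤ L, ∀ n < L, (n < j ↔ p n) := by
  induction L with
  | zero => exact ⟨0, le_rfl, by simp⟩
  | succ L ih =>
    obtain ⟨j, hj, hjn⟩ := ih (fun n hn => hp n (by omega))
    by_cases h : p L
    · refine ⟨L+1, le_rfl, fun n hn => ⟨fun _ => ?_, fun _ => hn⟩⟩
      have : ∀ k, k ≤ L → p (L - k) := by
        intro k
        induction k with
        | zero => intro _; simpa using h
        | succ k ihk =>
          intro hk
          have := ihk (by omega)
          apply hp _ (by omega)
          rwa [show L - (k+1) + 1 = L - k by omega]
      have := this (L - n) (by omega)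
      rwa [show L - (L - n) = n by omega] at this
    · refine ⟨j, by omega, fun n hn => ?_⟩
      rcases Nat.lt_succ_iff_lt_or_eq.1 hn with h1 | h1
      · exact hjn n h1
      · subst h1; exact ⟨fun hh => by omega, fun hh => absurd hh h⟩

lemma norm_sum_e_le (s : Finset ℕ) (x : ℕ → ℝ) : ‖∑ n ∈ s, e (x n)‖ ≤ s.card := by
  refine (norm_sum_le _ _).trans ?_
  simp [norm_e]

/-- one block -/
lemma vdc_block (x : ℕ → ℝ) (L : ℕ) (l Δ : ℝ) (hl : 0 < l) (hΔ : 0 < Δ) (hΔ' : Δ ≤ 1/4)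
    (h2 : ∀ n, n < L → l ≤ (x (n+2) - x (n+1)) - (x (n+1) - x n))
    (h3 : ∀ n, n < L → (x (n+1) - x n) - (x 1 - x 0) ≤ 1/2) :
    ‖∑ n ∈ Finset.range L, e (x n)‖ ≤ 2 / Δ + 2 * Δ / l + 1 := by
  set g : ℕ → ℝ := fun n => x (n+1) - x n with hg
  have hgs : ∀ n, n < L → g n + l ≤ g (n+1) := fun n hn => by have := h2 n hn; simp only [hg]; linarith
  have hgk : ∀ k n, n + k ≤ L → g n + k * l ≤ g (n + k) := by
    intro k n
    induction k with
    | zero => intro _; simp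
    | succ k ih =>
      intro h
      have h1 := ih (by omega)
      have h2 := hgs (n+k) (by omega)
      push_cast
      rw [← add_assoc]; linarith
  set ν : ℤ := ⌈g 0 - 1/4⌉ with hν
  have hν1 := Int.le_ceil (g 0 - 1/4)
  have hν2 := Int.ceil_lt_add_one (g 0 - 1/4)
  rw [← hν] at hν1 hν2
  obtain ⟨j1, hj1, hj1'⟩ := thresh (fun n => g n < ν - Δ) L
    (fun n hn h => by have := hgs n (by omega); linarith)
  obtain ⟨j2, hj2, hj2'⟩ := thresh (fun n => g n < ν + Δ) L
    (fun n hn h => by have := hgs n (by omega); linarith)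
  have h12 : j1 ≤ j2 := by
    by_contra hc
    have a1 := (hj1' j2 (by omega)).1 (by omega)
    have a2 := (hj2' j2 (by omega)).2 (by linarith)
    omega
  have hlow : ∀ n, n < L → g 0 ≤ g n := fun n hn => by
    have := hgk n 0 (by omega)
    rw [zero_add] at this
    have : 0 ≤ (n:ℝ) * l := by positivity
    linarith
  have hsplit : ∑ n ∈ Finset.range L, e (x n) = ∑ n ∈ Finset.range j1, e (x n)
      + ∑ n ∈ Finset.Ico j1 j2, e (x n) + ∑ n ∈ Finset.range (L - j2), e (x (j2 + n)) := by
    rw [Finset.sum_range_add_sum_Ico _ h12,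
      ← Finset.sum_Ico_eq_sum_range (fun n => e (x n)) j2 L,
      Finset.sum_range_add_sum_Ico _ hj2]
  rw [hsplit]
  refine (norm_add_le _ _).trans ?_
  refine (add_le_add_left (norm_add_le _ _) _).trans ?_
  have p1 : ‖∑ n ∈ Finset.range j1, e (x n)‖ ≤ 1 / Δ := by
    apply KL x j1 Δ (ν - 1) hΔ
    · intro n hn; have := hgs n (by omega); simp only [hg] at this; linarith
    · intro n hn
      have := hlow n (by omega)
      simp only [hg] at this hν2 ⊢; push_cast; linarith
    · intro n hn
      have := (hj1' n (by omega)).1 hn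
      simp only [hg] at this ⊢; push_cast; linarith
  have p3 : ‖∑ n ∈ Finset.range (L - j2), e (x (j2 + n))‖ ≤ 1 / Δ := by
    apply KL (fun n => x (j2 + n)) (L - j2) Δ ν hΔ
    · intro n hn; have := hgs (j2+n) (by omega); simp only [hg] at this
      simp only [← add_assoc]; linarith
    · intro n hn
      have := (hj2' (j2+n) (by omega)).not.1 (by omega)
      simp only [hg, not_lt] at this
      simp only [← add_assoc]; linarith
    · intro n hn
      have := h3 (j2+n) (by omega)
      simp only [hg] at hν1
      simp only [zero_add] at hν1
      simp only [← add_assoc]; linarith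
  have p2 : ‖∑ n ∈ Finset.Ico j1 j2, e (x n)‖ ≤ 2 * Δ / l + 1 := by
    refine (norm_sum_e_le _ _).trans ?_
    rw [Nat.card_Ico]
    rcases Nat.eq_or_lt_of_le h12 with hh | hh
    · rw [hh]; simp; positivity
    have a1 := (hj1' j1 (by omega)).not.1 (by omega)
    have a2 := (hj2' (j2-1) (by omega)).1 (by omega)
    have a3 := hgk (j2 - 1 - j1) j1 (by omega)
    rw [show j1 + (j2 - 1 - j1) = j2 - 1 by omega] at a3
    simp only [not_lt] at a1
    have a4 : ((j2 - 1 - j1 : ℕ) : ℝ) ≤ 2 * Δ / l := by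
      rw [le_div_iff₀ hl]; linarith
    have : j2 - j1 = (j2 - 1 - j1) + 1 := by omega
    rw [this]; push_cast; linarith
  have : 2 / Δ = 1 / Δ + 1 / Δ := by ring
  linarith

lemma block_sum (z : ℕ → ℂ) (B : ℕ) (hB : 0 < B) (E : ℝ) (hE : 0 ≤ E) (L : ℕ)
    (h : ∀ s len, len ≤ B → s + len ≤ L → ‖∑ n ∈ Finset.range len, z (s + n)‖ ≤ E) :
    ‖∑ n ∈ Finset.range L, z n‖ ≤ ((L : ℝ) / B + 1) * E := by
  induction L using Nat.strong_induction_on generalizing z with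
  | _ L ih =>
    have hB' : (0:ℝ) < B := by exact_mod_cast hB
    rcases le_or_gt L B with hL | hL
    · have := h 0 L hL (by omega)
      simp only [zero_add] at this
      have h1 : 0 ≤ (L:ℝ) / B := by positivity
      nlinarith
    · have h1 := h 0 B le_rfl (by omega)
      simp only [zero_add] at h1
      have h2 := ih (L - B) (by omega) (fun n => z (B + n)) (fun s len hs hl => by
        have := h (B + s) len hs (by omega)
        simpa [add_assoc] using this)
      have h3 : L = B + (L - B) := by omega
      have h4 : ∑ n ∈ Finset.range L, z n = ∑ n ∈ Finset.range B, z n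
          + ∑ n ∈ Finset.range (L - B), z (B + n) := by
        conv_lhs => rw [h3]
        rw [Finset.sum_range_add]
      rw [h4]
      refine (norm_add_le _ _).trans ?_
      have h5 : ((L - B : ℕ) : ℝ) = L - B := by push_cast [hL.le]; ring
      rw [h5] at h2
      have h6 : ((L:ℝ) - B) / B + 1 = L / B := by field_simp; ring
      rw [h6] at h2
      linarith

/-- second derivative test, discrete form -/
lemma vdc2 (x : ℕ → ℝ) (L : ℕ) (l : ℝ) (hl : 0 < l)
    (h2 : ∀ n, n < L → l ≤ (x (n+2) - x (n+1)) - (x (n+1) - x n))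
    (h3 : ∀ n, n < L → (x (n+2) - x (n+1)) - (x (n+1) - x n) ≤ 12 * l) :
    ‖∑ n ∈ Finset.range L, e (x n)‖ ≤ 240 * (L * √l) + 5 / √l := by
  have hs : 0 < √l := Real.sqrt_pos.2 hl
  have hsq : √l * √l = l := Real.mul_self_sqrt hl.le
  rcases le_or_gt (1/192) l with hb | hb
  · refine (norm_sum_e_le _ _).trans ?_
    rw [Finset.card_range]
    have h1 : 1/14 ≤ √l := Real.le_sqrt_of_sq_le (by norm_num; linarith)
    have : 0 < 5 / √l := by positivity
    have : (0:ℝ) ≤ L := by positivity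
    nlinarith
  · have hs4 : √l ≤ 1/4 := by
      rw [Real.sqrt_le_left (by norm_num)]; norm_num; linarith
    set B : ℕ := ⌊1 / (24 * l)⌋₊ with hBd
    have hB1 : (B:ℝ) ≤ 1 / (24 * l) := Nat.floor_le (by positivity)
    have hB2 : 1 / (24 * l) < B + 1 := Nat.lt_floor_add_one _
    have h8 : 8 ≤ 1 / (24 * l) := by
      rw [le_div_iff₀ (by positivity)]; linarith
    have hB0 : 0 < B := by
      have : (0:ℝ) < B := by linarith
      exact_mod_cast this
    have hB0' : (0:ℝ) < B := by exact_mod_cast hB0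
    have hmain := block_sum (fun n => e (x n)) B hB0 (2 / √l + 2 * √l / l + 1) (by positivity) L (by
      intro s len h1 h4
      refine vdc_block (fun n => x (s + n)) len l (√l) hl hs hs4 ?_ ?_
      · intro n hn; have := h2 (s+n) (by omega); simpa [add_assoc] using this
      · intro n hn
        have hind : ∀ n, n < len → (x (s + (n+1)) - x (s + n)) - (x (s+1) - x (s+0)) ≤ n * (12 * l) := by
          intro n
          induction n with
          | zero => intro _; simp
          | succ n ih =>
            intro hn
            have a1 := ih (by omega)
            have a2 := h3 (s+n) (by omega)
            push_cast
            simp only [add_assoc] at a1 a2 ⊢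
            norm_num at a1 a2 ⊢
            linarith
        refine (hind n hn).trans ?_
        have : (n:ℝ) ≤ B := by exact_mod_cast (by omega)
        have h6 : (B:ℝ) * (24 * l) ≤ 1 := by
          rwa [le_div_iff₀ (by positivity)] at hB1
        nlinarith)
    refine hmain.trans ?_
    have e1 : 2 * √l / l = 2 / √l := by
      rw [div_eq_div_iff hl.ne' hs.ne']; linear_combination 2 * hsq
    have e2 : 2 / √l + 2 * √l / l + 1 ≤ 5 / √l := by
      rw [e1]
      have : 1 ≤ 1 / √l := by rw [le_div_iff₀ hs]; linarith
      have h9 : 5 / √l = 2 / √l + 2 / √l + 1 / √l := by ring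
      linarith
    have e3 : (L:ℝ) / B ≤ L * (48 * l) := by
      rw [div_le_iff₀ hB0']
      have : 1 ≤ 48 * l * B := by
        have : 1 / (24 * l) ≤ 2 * B := by linarith
        rw [div_le_iff₀ (by positivity)] at this
        linarith
      have : (0:ℝ) ≤ L := by positivity
      nlinarith
    have : ((L:ℝ) / B + 1) * (2 / √l + 2 * √l / l + 1) ≤ (L * (48 * l) + 1) * (5 / √l) := by
      gcongr
    refine this.trans (le_of_eq ?_)
    field_simp
    linear_combination (-240 * (L:ℝ)) * (hsq)

lemma vdc_set (x : ℕ → ℝ) (S : Finset ℕ) (l Lr : ℝ) (hl : 0 < l) (hLr : 0 ≤ Lr)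
    (hS : ∀ a ∈ S, ∀ c ∈ S, ∀ b, a ≤ b → b ≤ c → b ∈ S)
    (hlen : ∀ a ∈ S, ∀ c ∈ S, a ≤ c → (c : ℝ) - a + 1 ≤ Lr)
    (h2 : ∀ n, n ∈ S → n + 2 ∈ S → l ≤ (x (n+2) - x (n+1)) - (x (n+1) - x n))
    (h3 : ∀ n, n ∈ S → n + 2 ∈ S → (x (n+2) - x (n+1)) - (x (n+1) - x n) ≤ 12 * l) :
    ‖∑ n ∈ S, e (x n)‖ ≤ 242 * (Lr * √l) + 7 / √l := by
  have hs : 0 < √l := Real.sqrt_pos.2 hl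
  rcases S.eq_empty_or_nonempty with h0 | h0
  · rw [h0]; simp; positivity
  set a := S.min' h0
  set c := S.max' h0
  have ha : a ∈ S := S.min'_mem h0
  have hc : c ∈ S := S.max'_mem h0
  have hac : a ≤ c := S.min'_le _ hc
  have hmem : ∀ b, a ≤ b → b ≤ c → b ∈ S := hS a ha c hc
  have hSe : S = Finset.Ico a (c+1) := by
    ext b
    rw [Finset.mem_Ico]
    exact ⟨fun h => ⟨S.min'_le _ h, Nat.lt_succ_of_le (S.le_max' _ h)⟩, fun h => hmem b h.1 (by omega)⟩
  have hL1 := hlen a ha c hc hac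
  have hL0 : 1 ≤ Lr := by
    have : (a:ℝ) ≤ c := by exact_mod_cast hac
    linarith
  have hLn : ((c - a - 1 : ℕ) : ℝ) ≤ Lr := by
    have h : ((c - a - 1 : ℕ) : ℝ) ≤ ((c - a : ℕ) : ℝ) := by exact_mod_cast (by omega)
    rw [Nat.cast_sub hac] at h
    linarith
  have hmain := vdc2 (fun n => x (a + n)) (c - a - 1) l hl
    (fun n hn => by
      have := h2 (a+n) (hmem _ (by omega) (by omega)) (hmem _ (by omega) (by omega))
      simpa [add_assoc] using this)
    (fun n hn => by
      have := h3 (a+n) (hmem _ (by omega) (by omega)) (hmem _ (by omega) (by omega))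
      simpa [add_assoc] using this)
  have h1 : 2 ≤ 2 * (Lr * √l) + 2 / √l := by
    have h5 : √l ≤ Lr * √l := by nlinarith
    have h6 : 2 ≤ 2 * √l + 2 / √l := by
      have : 2 * √l + 2 / √l - 2 = (2 * (√l - 1/2) ^ 2 + 3/2) / √l := by field_simp; ring
      have h7 : 0 ≤ (2 * (√l - 1/2) ^ 2 + 3/2) / √l := by positivity
      linarith
    linarith
  have hsum : ∑ n ∈ S, e (x n) = ∑ n ∈ Finset.range (c - a - 1), e (x (a + n))
      + ∑ n ∈ Finset.Ico (c-a-1) (c+1-a), e (x (a+n)) := by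
    rw [Finset.sum_range_add_sum_Ico (fun n => e (x (a+n))) (show c-a-1 ≤ c+1-a by omega), hSe,
      Finset.sum_Ico_eq_sum_range]
  rw [hsum]
  refine (norm_add_le _ _).trans ?_
  have h9 : ‖∑ n ∈ Finset.Ico (c-a-1) (c+1-a), e (x (a+n))‖ ≤ 2 := by
    refine (norm_sum_e_le _ (fun n => x (a+n))).trans ?_
    rw [Nat.card_Ico]
    have : c + 1 - a - (c - a - 1) ≤ 2 := by omega
    exact_mod_cast this
  have h10 : 240 * (((c - a - 1 : ℕ) : ℝ) * √l) ≤ 240 * (Lr * √l) := by gcongr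
  have h11 : 7 / √l = 5 / √l + 2 / √l := by ring
  linarith

lemma vdc_set_neg (x : ℕ → ℝ) (S : Finset ℕ) (l Lr : ℝ) (hl : 0 < l) (hLr : 0 ≤ Lr)
    (hS : ∀ a ∈ S, ∀ c ∈ S, ∀ b, a ≤ b → b ≤ c → b ∈ S)
    (hlen : ∀ a ∈ S, ∀ c ∈ S, a ≤ c → (c : ℝ) - a + 1 ≤ Lr)
    (h2 : ∀ n, n ∈ S → n + 2 ∈ S → l ≤ -((x (n+2) - x (n+1)) - (x (n+1) - x n)))
    (h3 : ∀ n, n ∈ S → n + 2 ∈ S → -((x (n+2) - x (n+1)) - (x (n+1) - x n)) ≤ 12 * l) :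
    ‖∑ n ∈ S, e (x n)‖ ≤ 242 * (Lr * √l) + 7 / √l := by
  have := vdc_set (fun n => - x n) S l Lr hl hLr hS hlen
    (fun n a b => by have := h2 n a b; linarith) (fun n a b => by have := h3 n a b; linarith)
  rw [← Complex.norm_conj, map_sum]
  simpa only [conj_e] using this

lemma abel_bd (S : Finset ℕ) (z : ℕ → ℂ) (E : ℝ) (b : ℕ → ℝ) (Bd : ℝ)
    (hb0 : ∀ n ∈ S, 0 ≤ b n) (hbB : ∀ n ∈ S, b n ≤ Bd) (hBd : 0 ≤ Bd)
    (hmono : ∀ n ∈ S, ∀ m ∈ S, n ≤ m → b n ≤ b m)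
    (hE : ∀ j, ‖∑ n ∈ S.filter (fun n => j ≤ n), z n‖ ≤ E) :
    ‖∑ n ∈ S, (b n : ℂ) * z n‖ ≤ Bd * E := by
  induction S using Finset.induction_on_min generalizing b Bd with
  | empty =>
    have := hE 0
    simp at this ⊢; positivity
  | insert a s ha ih =>
    have has : a ∉ s := fun h => lt_irrefl _ (ha a h)
    have hdec : ∑ n ∈ insert a s, (b n : ℂ) * z n = (b a : ℂ) * ∑ n ∈ insert a s, z n
        + ∑ n ∈ s, ((b n - b a : ℝ) : ℂ) * z n := by
      rw [Finset.sum_insert has, Finset.sum_insert has, mul_add, Finset.mul_sum, add_assoc,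
        ← Finset.sum_add_distrib]
      congr 1
      apply Finset.sum_congr rfl
      intro n _
      push_cast; ring
    have h1 := ih (fun n => b n - b a) (Bd - b a)
      (fun n hn => by
        have := hmono a (by simp) n (by simp [hn]) (ha n hn).le
        linarith)
      (fun n hn => by have := hbB n (by simp [hn]); linarith)
      (by have := hbB a (by simp); linarith)
      (fun n hn m hm h => by
        have := hmono n (by simp [hn]) m (by simp [hm]) h
        linarith)
      (fun j => by
        have := hE (max j (a+1))
        rw [Finset.filter_insert, if_neg (by simp)] at this
        rw [show s.filter (fun n => j ≤ n) = s.filter (fun n => max j (a+1) ≤ n) from ?_]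
        · exact this
        · apply Finset.filter_congr
          intro n hn
          have := ha n hn
          simp only [max_le_iff]; omega)
    have h0 := hE 0
    simp only [zero_le, Finset.filter_true] at h0
    rw [hdec]
    refine (norm_add_le _ _).trans ?_
    rw [norm_mul, Complex.norm_real, Real.norm_eq_abs, abs_of_nonneg (hb0 a (by simp))]
    have := mul_le_mul_of_nonneg_left h0 (hb0 a (by simp))
    linarith

lemma norm_sum_sq_le {ι : Type*} (s : Finset ι) (w : ι → ℂ) :
    ‖∑ i ∈ s, w i‖ ^ 2 ≤ s.card * ∑ i ∈ s, ‖w i‖ ^ 2 := by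
  calc ‖∑ i ∈ s, w i‖ ^ 2 ≤ (∑ i ∈ s, ‖w i‖) ^ 2 := by
        gcongr; exact norm_sum_le _ _
    _ ≤ _ := sq_sum_le_card_mul_sum_sq

lemma norm_sq_sum_eq {ι : Type*} (s : Finset ι) (w : ι → ℂ) :
    ((‖∑ i ∈ s, w i‖ ^ 2 : ℝ) : ℂ) = ∑ i ∈ s, ∑ k ∈ s, w i * (starRingEnd ℂ) (w k) := by
  rw [← Finset.sum_mul_sum, ← map_sum, Complex.mul_conj']; push_cast; rfl

lemma box_one (Q1 Q2 : ℕ) (z : ℕ → ℕ → ℂ) :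
    ‖∑ s ∈ Finset.range Q2, ∑ q ∈ Finset.range Q1, z s q‖ ^ 4 ≤
      ((Q1 : ℝ) * Q2) ^ 2 * ∑ q ∈ Finset.range Q1, ∑ q' ∈ Finset.range Q1,
        ‖∑ s ∈ Finset.range Q2, z s q * (starRingEnd ℂ) (z s q')‖ ^ 2 := by
  set A : ℝ := ∑ s ∈ Finset.range Q2, ‖∑ q ∈ Finset.range Q1, z s q‖ ^ 2 with hA
  have h1 := norm_sum_sq_le (Finset.range Q2) (fun s => ∑ q ∈ Finset.range Q1, z s q)
  rw [← hA, Finset.card_range] at h1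
  have hA0 : 0 ≤ A := Finset.sum_nonneg (fun _ _ => by positivity)
  have hAc : (A : ℂ) = ∑ q ∈ Finset.range Q1, ∑ q' ∈ Finset.range Q1,
        ∑ s ∈ Finset.range Q2, z s q * (starRingEnd ℂ) (z s q') := by
    rw [hA, Complex.ofReal_sum]
    simp_rw [norm_sq_sum_eq]
    rw [Finset.sum_comm]
    apply Finset.sum_congr rfl; intro q _
    rw [Finset.sum_comm]
  have hA1 : A ≤ ∑ q ∈ Finset.range Q1, ∑ q' ∈ Finset.range Q1,
        ‖∑ s ∈ Finset.range Q2, z s q * (starRingEnd ℂ) (z s q')‖ := by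
    have : A = ‖(A : ℂ)‖ := by rw [Complex.norm_real, Real.norm_eq_abs, abs_of_nonneg hA0]
    rw [this, hAc]
    refine (norm_sum_le _ _).trans (Finset.sum_le_sum fun q _ => norm_sum_le _ _)
  have hA2 : A ^ 2 ≤ (Q1 : ℝ) ^ 2 * ∑ q ∈ Finset.range Q1, ∑ q' ∈ Finset.range Q1,
        ‖∑ s ∈ Finset.range Q2, z s q * (starRingEnd ℂ) (z s q')‖ ^ 2 := by
    refine (pow_le_pow_left₀ hA0 hA1 2).trans ?_
    rw [← Finset.sum_product', ← Finset.sum_product']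
    refine (sq_sum_le_card_mul_sum_sq).trans (le_of_eq ?_)
    rw [Finset.card_product, Finset.card_range]; push_cast; ring
  calc _ = (‖∑ s ∈ Finset.range Q2, ∑ q ∈ Finset.range Q1, z s q‖ ^ 2) ^ 2 := by ring
    _ ≤ (Q2 * A) ^ 2 := by gcongr
    _ = (Q2:ℝ) ^ 2 * A ^ 2 := by ring
    _ ≤ (Q2:ℝ) ^ 2 * _ := mul_le_mul_of_nonneg_left hA2 (by positivity)
    _ = _ := by ring

lemma box_sum (J : Finset ℕ) (Q1 Q2 : ℕ) (z : ℕ → ℕ → ℕ → ℂ) :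
    ∑ j ∈ J, ‖∑ s ∈ Finset.range Q2, ∑ q ∈ Finset.range Q1, z j s q‖ ^ 4 ≤
      ((Q1 : ℝ) * Q2) ^ 2 * ∑ q ∈ Finset.range Q1, ∑ q' ∈ Finset.range Q1,
        ∑ s ∈ Finset.range Q2, ∑ s' ∈ Finset.range Q2,
        ‖∑ j ∈ J, z j s q * (starRingEnd ℂ) (z j s q') *
          (starRingEnd ℂ) (z j s' q * (starRingEnd ℂ) (z j s' q'))‖ := by
  refine (Finset.sum_le_sum fun j _ => box_one Q1 Q2 (z j)).trans ?_
  rw [← Finset.mul_sum]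
  refine mul_le_mul_of_nonneg_left ?_ (by positivity)
  rw [Finset.sum_comm]
  refine Finset.sum_le_sum fun q _ => ?_
  rw [Finset.sum_comm]
  refine Finset.sum_le_sum fun q' _ => ?_
  set A : ℝ := ∑ j ∈ J, ‖∑ s ∈ Finset.range Q2, z j s q * (starRingEnd ℂ) (z j s q')‖ ^ 2 with hA
  have hA0 : 0 ≤ A := Finset.sum_nonneg (fun _ _ => by positivity)
  have hAc : (A : ℂ) = ∑ s ∈ Finset.range Q2, ∑ s' ∈ Finset.range Q2,
      ∑ j ∈ J, z j s q * (starRingEnd ℂ) (z j s q') *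
          (starRingEnd ℂ) (z j s' q * (starRingEnd ℂ) (z j s' q')) := by
    rw [hA, Complex.ofReal_sum]
    simp_rw [norm_sq_sum_eq]
    rw [Finset.sum_comm]
    apply Finset.sum_congr rfl; intro q _
    rw [Finset.sum_comm]
  have : A = ‖(A : ℂ)‖ := by rw [Complex.norm_real, Real.norm_eq_abs, abs_of_nonneg hA0]
  rw [this, hAc]
  exact (norm_sum_le _ _).trans (Finset.sum_le_sum fun q _ => norm_sum_le _ _)

lemma box_total (J : Finset ℕ) (I Q1 Q2 : ℕ) (z : ℕ → ℕ → ℕ → ℕ → ℂ) :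
    (∑ j ∈ J, ‖∑ i ∈ Finset.range I, ∑ s ∈ Finset.range Q2, ∑ q ∈ Finset.range Q1, z i j s q‖) ^ 4 ≤
      ((J.card : ℝ) * I) ^ 3 * (((Q1 : ℝ) * Q2) ^ 2 * ∑ i ∈ Finset.range I,
        ∑ q ∈ Finset.range Q1, ∑ q' ∈ Finset.range Q1,
        ∑ s ∈ Finset.range Q2, ∑ s' ∈ Finset.range Q2,
        ‖∑ j ∈ J, z i j s q * (starRingEnd ℂ) (z i j s q') *
          (starRingEnd ℂ) (z i j s' q * (starRingEnd ℂ) (z i j s' q'))‖) := by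
  set β : ℕ → ℕ → ℝ := fun i j => ‖∑ s ∈ Finset.range Q2, ∑ q ∈ Finset.range Q1, z i j s q‖ with hβ
  have h1 : ∑ j ∈ J, ‖∑ i ∈ Finset.range I, ∑ s ∈ Finset.range Q2, ∑ q ∈ Finset.range Q1, z i j s q‖
      ≤ ∑ p ∈ J ×ˢ Finset.range I, β p.2 p.1 := by
    rw [Finset.sum_product]
    exact Finset.sum_le_sum fun j _ => norm_sum_le _ _
  have hcard : ((J ×ˢ Finset.range I).card : ℝ) = J.card * I := by
    rw [Finset.card_product, Finset.card_range]; push_cast; ring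
  have h2 : (∑ p ∈ J ×ˢ Finset.range I, β p.2 p.1) ^ 4
      ≤ ((J.card : ℝ) * I) ^ 3 * ∑ p ∈ J ×ˢ Finset.range I, β p.2 p.1 ^ 4 := by
    rw [← hcard]
    have a1 := sq_sum_le_card_mul_sum_sq (s := J ×ˢ Finset.range I) (f := fun p => β p.2 p.1)
    have a2 := sq_sum_le_card_mul_sum_sq (s := J ×ˢ Finset.range I) (f := fun p => β p.2 p.1 ^ 2)
    have a3 : ∀ p : ℕ × ℕ, (β p.2 p.1 ^ 2) ^ 2 = β p.2 p.1 ^ 4 := fun p => by ring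
    simp only [a3] at a2
    calc _ = ((∑ p ∈ J ×ˢ Finset.range I, β p.2 p.1) ^ 2) ^ 2 := by ring
      _ ≤ (((J ×ˢ Finset.range I).card : ℝ) * ∑ p ∈ J ×ˢ Finset.range I, β p.2 p.1 ^ 2) ^ 2 := by gcongr
      _ = ((J ×ˢ Finset.range I).card : ℝ) ^ 2 * (∑ p ∈ J ×ˢ Finset.range I, β p.2 p.1 ^ 2) ^ 2 := by ring
      _ ≤ ((J ×ˢ Finset.range I).card : ℝ) ^ 2 * _ := mul_le_mul_of_nonneg_left a2 (by positivity)
      _ = _ := by ring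
  refine (pow_le_pow_left₀ (Finset.sum_nonneg fun _ _ => norm_nonneg _) h1 4).trans (h2.trans ?_)
  refine mul_le_mul_of_nonneg_left ?_ (by positivity)
  rw [Finset.sum_product, Finset.sum_comm, Finset.mul_sum]
  exact Finset.sum_le_sum fun i _ => box_sum J Q1 Q2 (z i)

lemma sum_range_mul_eq {α : Type*} [AddCommMonoid α] (f : ℕ → α) (n Q : ℕ) :
    ∑ k ∈ Finset.range (Q * n), f k = ∑ i ∈ Finset.range n, ∑ q ∈ Finset.range Q, f (q + Q * i) := by
  induction n with
  | zero => simp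
  | succ n ih =>
    rw [Nat.mul_succ, Finset.sum_range_add, ih, Finset.sum_range_succ]
    simp_rw [add_comm (Q * n)]

lemma pow_diff2 (s x a b : ℝ) (hx : 0 < x) (ha : 0 < a) (hb : 0 < b) :
    ∃ ξ, x ≤ ξ ∧ ξ ≤ x + a + b ∧
      (x + a + b) ^ s - (x + a) ^ s - (x + b) ^ s + x ^ s = a * b * (s * (s - 1)) * ξ ^ (s - 2) := by
  have hd : ∀ (p y : ℝ), 0 < y → HasDerivAt (fun y : ℝ => y ^ p) (p * y ^ (p - 1)) y :=
    fun p y hy => Real.hasDerivAt_rpow_const (Or.inl hy.ne')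
  obtain ⟨η, hη, hη'⟩ := exists_hasDerivAt_eq_slope (fun y : ℝ => (y + b) ^ s - y ^ s)
    (fun y => s * (y + b) ^ (s - 1) - s * y ^ (s - 1)) (show x < x + a by linarith)
    (fun y hy => by
      have hy0 : 0 < y := by linarith [hy.1]
      exact (((hd s (y+b) (by linarith)).comp_add_const y b).sub (hd s y hy0)).continuousAt.continuousWithinAt)
    (fun y hy => by
      have hy0 : 0 < y := by linarith [hy.1]
      exact ((hd s (y+b) (by linarith)).comp_add_const y b).sub (hd s y hy0))
  have hη0 : 0 < η := by linarith [hη.1]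
  obtain ⟨ξ, hξ, hξ'⟩ := exists_hasDerivAt_eq_slope (fun y : ℝ => y ^ (s - 1))
    (fun y => (s - 1) * y ^ (s - 1 - 1)) (show η < η + b by linarith)
    (fun y hy => (hd (s-1) y (by linarith [hy.1])).continuousAt.continuousWithinAt)
    (fun y hy => hd (s-1) y (by linarith [hy.1]))
  refine ⟨ξ, by linarith [hξ.1, hη.1], by linarith [hξ.2, hη.2], ?_⟩
  rw [eq_div_iff (by linarith)] at hη' hξ'
  rw [show s - 1 - 1 = s - 2 by ring] at hξ'
  rw [show x + a + b = x + a + b by ring]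
  linear_combination (-1) * hη' - a * s * hξ'

/-- the phase -/
noncomputable def ph (t c h γ : ℝ) (n : ℕ) : ℝ := t * (n : ℝ) ^ c - h * (n : ℝ) ^ γ

/-- size of the `t`-part relative to the main part -/
def Scale (κ1 κ2 t c h γ N : ℝ) : Prop :=
  ∀ η ξ : ℝ, N ≤ η → η ≤ 2 * N → N ≤ ξ → ξ ≤ 2 * N →
    |t * κ1 * η ^ (c - 2)| ≤ 1 / 2 * (κ2 * h * ξ ^ (γ - 2))

/-- base size of the second difference -/
noncomputable def lam (κ2 h γ N : ℝ) : ℝ := κ2 * h * (2 * N) ^ (γ - 2) / 2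

lemma bracket {κ1 κ2 t c h γ N : ℝ} (hN : 1 ≤ N) (hκ : 0 < κ2) (hh : 0 < h) (hγ0 : 0 < γ)
    (hγ1 : γ < 1) (hsc : Scale κ1 κ2 t c h γ N) (η ξ : ℝ) (h1 : N ≤ η) (h2 : η ≤ 2 * N)
    (h3 : N ≤ ξ) (h4 : ξ ≤ 2 * N) (y : ℝ) (hy : |y| = |t * κ1 * η ^ (c - 2)|) :
    lam κ2 h γ N ≤ κ2 * h * ξ ^ (γ - 2) + y ∧ κ2 * h * ξ ^ (γ - 2) + y ≤ 12 * lam κ2 h γ N := by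
  have hs := hsc η ξ h1 h2 h3 h4
  rw [← hy] at hs
  have hs' := abs_le.1 hs
  have a1 : (2 * N) ^ (γ - 2) ≤ ξ ^ (γ - 2) :=
    Real.rpow_le_rpow_of_nonpos (by linarith) h4 (by linarith)
  have a2 : ξ ^ (γ - 2) ≤ N ^ (γ - 2) :=
    Real.rpow_le_rpow_of_nonpos (by linarith) h3 (by linarith)
  have a3 : N ^ (γ - 2) ≤ 4 * (2 * N) ^ (γ - 2) := by
    rw [Real.mul_rpow (by norm_num) (by linarith)]
    have : (1/4 : ℝ) ≤ 2 ^ (γ - 2) := by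
      calc (1/4 : ℝ) = 2 ^ (-2 : ℝ) := by
            rw [Real.rpow_neg (by norm_num)]; norm_num
        _ ≤ _ := Real.rpow_le_rpow_of_exponent_le (by norm_num) (by linarith)
    have : 0 < N ^ (γ - 2) := Real.rpow_pos_of_pos (by linarith) _
    nlinarith
  have hk : 0 < κ2 * h := by positivity
  have b1 := mul_le_mul_of_nonneg_left a1 hk.le
  have b2 := mul_le_mul_of_nonneg_left (a2.trans a3) hk.le
  unfold lam
  constructor <;> linarith

lemma lam_pos {κ2 h γ N : ℝ} (hN : 1 ≤ N) (hκ : 0 < κ2) (hh : 0 < h) : 0 < lam κ2 h γ N := by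
  unfold lam
  have : 0 < (2 * N) ^ (γ - 2) := Real.rpow_pos_of_pos (by linarith) _
  positivity

lemma caseC_inner {t c h γ N : ℝ} (hN : 1 ≤ N) (hh : 0 < h) (hγ0 : 0 < γ)
    (hγ1 : γ < 1) (hsc : Scale (c * (c - 1)) (γ * (1 - γ)) t c h γ N)
    (m d ρ : ℕ) (hm : 0 < m) (hd : 0 < d) (S : Finset ℕ)
    (hSc : ∀ a ∈ S, ∀ c ∈ S, ∀ b, a ≤ b → b ≤ c → b ∈ S)
    (hS : ∀ k ∈ S, N < (m * (ρ + d * k) : ℕ) ∧ ((m * (ρ + d * k) : ℕ) : ℝ) ≤ 2 * N) :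
    ‖∑ k ∈ S, e (ph t c h γ (m * (ρ + d * k)))‖ ≤
      242 * ((N / (m * d) + 1) * √(lam (γ * (1 - γ)) h γ N * (m * d) ^ 2))
      + 7 / √(lam (γ * (1 - γ)) h γ N * (m * d) ^ 2) := by
  have hκ : 0 < γ * (1 - γ) := mul_pos hγ0 (by linarith)
  have hl := lam_pos (γ := γ) hN hκ hh
  have hm' : (0:ℝ) < m := by exact_mod_cast hm
  have hd' : (0:ℝ) < d := by exact_mod_cast hd
  have key : ∀ k, k ∈ S → k + 2 ∈ S → ∃ V, (lam (γ * (1 - γ)) h γ N ≤ V ∧ V ≤ 12 * lam (γ * (1 - γ)) h γ N) ∧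
      (ph t c h γ (m * (ρ + d * (k+2))) - ph t c h γ (m * (ρ + d * (k+1)))) -
      (ph t c h γ (m * (ρ + d * (k+1))) - ph t c h γ (m * (ρ + d * k))) = V * (m * d) ^ 2 := by
    intro k hk hk2
    set x : ℝ := ρ + d * k with hx
    have c1 := (hS k hk).1
    have c2 := (hS _ hk2).2
    have e0 : ((m * (ρ + d * k) : ℕ) : ℝ) = m * x := by push_cast; ring
    have e1 : ((m * (ρ + d * (k+1)) : ℕ) : ℝ) = m * (x + d) := by push_cast; ring
    have e2 : ((m * (ρ + d * (k+2)) : ℕ) : ℝ) = m * (x + d + d) := by push_cast; ring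
    rw [e0] at c1
    rw [e2] at c2
    have hx0 : 0 < x := by
      by_contra hc
      have : (m:ℝ) * x ≤ 0 := mul_nonpos_of_nonneg_of_nonpos hm'.le (by linarith)
      linarith
    obtain ⟨η, g1, g2, g3⟩ := pow_diff2 c x d d hx0 hd' hd'
    obtain ⟨ξ, f1, f2, f3⟩ := pow_diff2 γ x d d hx0 hd' hd'
    have mη1 : N ≤ m * η := by nlinarith
    have mη2 : m * η ≤ 2 * N := by nlinarith
    have mξ1 : N ≤ m * ξ := by nlinarith
    have mξ2 : m * ξ ≤ 2 * N := by nlinarith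
    refine ⟨_, bracket hN hκ hh hγ0 hγ1 hsc (m * η) (m * ξ) mη1 mη2 mξ1 mξ2
      (t * (c * (c - 1)) * (m * η) ^ (c - 2)) rfl, ?_⟩
    unfold ph
    rw [e0, e1, e2]
    have hη0 : 0 < η := by linarith
    have hξ0 : 0 < ξ := by linarith
    rw [Real.mul_rpow hm'.le (by positivity), Real.mul_rpow hm'.le (by positivity),
      Real.mul_rpow hm'.le (by positivity), Real.mul_rpow hm'.le (by positivity),
      Real.mul_rpow hm'.le (by positivity), Real.mul_rpow hm'.le (by positivity),
      Real.mul_rpow hm'.le hη0.le, Real.mul_rpow hm'.le hξ0.le]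
    have p1 : (m:ℝ) ^ c = m ^ (c - 2) * m ^ 2 := by
      rw [← Real.rpow_natCast, ← Real.rpow_add hm']; congr 1; push_cast; ring
    have p2 : (m:ℝ) ^ γ = m ^ (γ - 2) * m ^ 2 := by
      rw [← Real.rpow_natCast, ← Real.rpow_add hm']; congr 1; push_cast; ring
    rw [p1, p2]
    linear_combination (t * (m ^ (c - 2) * m ^ 2)) * g3 - (h * (m ^ (γ - 2) * m ^ 2)) * f3
  apply vdc_set (fun k => ph t c h γ (m * (ρ + d * k))) S _ (N / (m * d) + 1) (by positivity)
    (by positivity) hSc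
  · intro a ha b hb hab
    have c1 := (hS a ha).1
    have c2 := (hS b hb).2
    push_cast at c1 c2
    have : (b:ℝ) - a ≤ N / (m * d) := by
      rw [le_div_iff₀ (by positivity)]; nlinarith
    linarith
  · intro k hk hk2
    obtain ⟨V, ⟨v1, v2⟩, hV⟩ := key k hk hk2
    rw [hV]; gcongr
  · intro k hk hk2
    obtain ⟨V, ⟨v1, v2⟩, hV⟩ := key k hk hk2
    rw [hV, ← mul_assoc]; gcongr

lemma caseA_inner {t c h γ N : ℝ} (hN : 1 ≤ N) (hh : 0 < h) (hγ0 : 0 < γ)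
    (hγ1 : γ < 1) (hsc : Scale ((c * (c - 1)) ^ 2) ((γ * (1 - γ)) ^ 2) t c h γ N)
    (r d l0 a b : ℕ) (ha : 0 < a) (hb : 0 < b) (hd : 0 < d) (S : Finset ℕ) (Lr : ℝ) (hLr : 0 ≤ Lr)
    (hSc : ∀ a ∈ S, ∀ c ∈ S, ∀ b, a ≤ b → b ≤ c → b ∈ S)
    (hlen : ∀ a ∈ S, ∀ c ∈ S, a ≤ c → (c : ℝ) - a + 1 ≤ Lr)
    (hS : ∀ j ∈ S, N < ((r + d * j) * l0 : ℕ) ∧ (((r + d * j) * (l0 + a + b) : ℕ) : ℝ) ≤ 2 * N) :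
    ‖∑ j ∈ S, e (ph t c h γ ((r + d * j) * (l0 + a + b)) - ph t c h γ ((r + d * j) * (l0 + a))
        - ph t c h γ ((r + d * j) * (l0 + b)) + ph t c h γ ((r + d * j) * l0))‖ ≤
      242 * (Lr * √(lam ((γ * (1 - γ)) ^ 2) h γ N * (d ^ 2 * (a * b))))
      + 7 / √(lam ((γ * (1 - γ)) ^ 2) h γ N * (d ^ 2 * (a * b))) := by
  have hκ' : 0 < γ * (1 - γ) := mul_pos hγ0 (by linarith)
  have hκ : 0 < (γ * (1 - γ)) ^ 2 := by positivity
  have hl := lam_pos (γ := γ) hN hκ hh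
  have ha' : (0:ℝ) < a := by exact_mod_cast ha
  have hb' : (0:ℝ) < b := by exact_mod_cast hb
  have hd' : (0:ℝ) < d := by exact_mod_cast hd
  set x : ℕ → ℝ := fun j => ph t c h γ ((r + d * j) * (l0 + a + b)) - ph t c h γ ((r + d * j) * (l0 + a))
        - ph t c h γ ((r + d * j) * (l0 + b)) + ph t c h γ ((r + d * j) * l0) with hx
  have key : ∀ k, k ∈ S → k + 2 ∈ S → ∃ V, (lam ((γ * (1 - γ)) ^ 2) h γ N ≤ V ∧
      V ≤ 12 * lam ((γ * (1 - γ)) ^ 2) h γ N) ∧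
      -((x (k + 2) - x (k + 1)) - (x (k + 1) - x k)) = V * (d ^ 2 * (a * b)) := by
    intro k hk hk2
    set m : ℝ := r + d * k with hm
    have c1 := (hS k hk).1
    have c2 := (hS _ hk2).2
    have f0 : ((r + d * k : ℕ) : ℝ) = m := by push_cast; ring
    have f1 : ((r + d * (k+1) : ℕ) : ℝ) = m + d := by push_cast; ring
    have f2 : ((r + d * (k+2) : ℕ) : ℝ) = m + d + d := by push_cast; ring
    rw [Nat.cast_mul, f0] at c1
    rw [Nat.cast_mul, f2] at c2
    push_cast at c2
    have hm0' : 0 ≤ m := by positivity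
    have hl0' : (0:ℝ) ≤ l0 := by positivity
    have hm0 : 0 < m := by
      rcases hm0'.eq_or_lt with h0 | h0
      · rw [← h0, zero_mul] at c1; linarith
      · exact h0
    have hl0 : (0:ℝ) < l0 := by
      rcases hl0'.eq_or_lt with h0 | h0
      · rw [← h0, mul_zero] at c1; linarith
      · exact h0
    obtain ⟨η, g1, g2, g3⟩ := pow_diff2 c m d d hm0 hd' hd'
    obtain ⟨ξ, u1, u2, u3⟩ := pow_diff2 γ m d d hm0 hd' hd'
    obtain ⟨η', g1', g2', g3'⟩ := pow_diff2 c l0 a b hl0 ha' hb'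
    obtain ⟨ξ', u1', u2', u3'⟩ := pow_diff2 γ l0 a b hl0 ha' hb'
    have hη0 : 0 < η := by linarith
    have hξ0 : 0 < ξ := by linarith
    have hη0' : 0 < η' := by linarith
    have hξ0' : 0 < ξ' := by linarith
    have mη1 : N ≤ η * η' := c1.le.trans (by gcongr)
    have mη2 : η * η' ≤ 2 * N := le_trans (by gcongr) c2
    have mξ1 : N ≤ ξ * ξ' := c1.le.trans (by gcongr)
    have mξ2 : ξ * ξ' ≤ 2 * N := le_trans (by gcongr) c2
    refine ⟨_, bracket hN hκ hh hγ0 hγ1 hsc (η * η') (ξ * ξ') mη1 mη2 mξ1 mξ2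
      (-(t * (c * (c - 1)) ^ 2 * (η * η') ^ (c - 2))) (abs_neg _), ?_⟩
    have hph : ∀ (u v : ℕ), ph t c h γ (u * v) = t * ((u:ℝ) ^ c * (v:ℝ) ^ c) - h * ((u:ℝ) ^ γ * (v:ℝ) ^ γ) := by
      intro u v
      unfold ph
      rw [Nat.cast_mul, Real.mul_rpow (by positivity) (by positivity),
        Real.mul_rpow (by positivity) (by positivity)]
    simp only [hx, hph, f0, f1, f2]
    rw [Real.mul_rpow hη0.le hη0'.le, Real.mul_rpow hξ0.le hξ0'.le]
    push_cast
    have pc : ((m + d + d) ^ c - (m + d) ^ c - (m + d) ^ c + m ^ c) *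
      (((l0:ℝ) + a + b) ^ c - (l0 + a) ^ c - (l0 + b) ^ c + l0 ^ c) =
      (d * d * (c * (c - 1)) * η ^ (c - 2)) * (a * b * (c * (c - 1)) * η' ^ (c - 2)) := by
      rw [g3, g3']
    have pγ : ((m + d + d) ^ γ - (m + d) ^ γ - (m + d) ^ γ + m ^ γ) *
      (((l0:ℝ) + a + b) ^ γ - (l0 + a) ^ γ - (l0 + b) ^ γ + l0 ^ γ) =
      (d * d * (γ * (γ - 1)) * ξ ^ (γ - 2)) * (a * b * (γ * (γ - 1)) * ξ' ^ (γ - 2)) := by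
      rw [u3, u3']
    linear_combination (-t) * pc + h * pγ
  apply vdc_set_neg x S _ Lr (by positivity) hLr hSc hlen
  · intro k hk hk2
    obtain ⟨V, ⟨v1, v2⟩, hV⟩ := key k hk hk2
    rw [hV]; gcongr
  · intro k hk hk2
    obtain ⟨V, ⟨v1, v2⟩, hV⟩ := key k hk hk2
    rw [hV, ← mul_assoc 12]; gcongr

open scoped Classical in
/-- one summand -/
noncomputable def Zt (N t c h γ : ℝ) (b : ℕ → ℝ) (m l : ℕ) : ℂ :=
  if N < ((m * l : ℕ) : ℝ) ∧ ((m * l : ℕ) : ℝ) ≤ 2 * N then (b l : ℂ) * e (ph t c h γ (m * l)) else 0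

/-- the box correlation -/
noncomputable def bt (N t c h γ : ℝ) (b : ℕ → ℝ) (J : Finset ℕ) (r d l1 l2 l3 l4 : ℕ) : ℂ :=
  ∑ j ∈ J, Zt N t c h γ b (r + d * j) l1 * (starRingEnd ℂ) (Zt N t c h γ b (r + d * j) l2) *
    (starRingEnd ℂ) (Zt N t c h γ b (r + d * j) l3 * (starRingEnd ℂ) (Zt N t c h γ b (r + d * j) l4))

lemma bt_swap1 (N t c h γ : ℝ) (b : ℕ → ℝ) (J : Finset ℕ) (r d l1 l2 l3 l4 : ℕ) :
    ‖bt N t c h γ b J r d l1 l2 l3 l4‖ = ‖bt N t c h γ b J r d l2 l1 l4 l3‖ := by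
  rw [← Complex.norm_conj]; congr 1
  unfold bt; rw [map_sum]
  apply Finset.sum_congr rfl; intro j _
  simp only [map_mul, Complex.conj_conj]; ring

lemma bt_swap2 (N t c h γ : ℝ) (b : ℕ → ℝ) (J : Finset ℕ) (r d l1 l2 l3 l4 : ℕ) :
    ‖bt N t c h γ b J r d l1 l2 l3 l4‖ = ‖bt N t c h γ b J r d l3 l4 l1 l2‖ := by
  rw [← Complex.norm_conj]; congr 1
  unfold bt; rw [map_sum]
  apply Finset.sum_congr rfl; intro j _
  simp only [map_mul, Complex.conj_conj]; ring

lemma Zt_norm {N t c h γ Lg : ℝ} {b : ℕ → ℝ} (hN : 1 ≤ N) (hLg : 0 ≤ Lg)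
    (hb : ∀ l : ℕ, (l : ℝ) ≤ 2 * N → |b l| ≤ Lg) (m l : ℕ) : ‖Zt N t c h γ b m l‖ ≤ Lg := by
  unfold Zt
  split_ifs with hc
  · rw [norm_mul, norm_e, mul_one, Complex.norm_real]
    apply hb
    have hm : 1 ≤ m := by
      rcases Nat.eq_zero_or_pos m with h0 | h0
      · rw [h0] at hc; simp at hc; linarith
      · exact h0
    refine le_trans ?_ hc.2
    exact_mod_cast Nat.le_mul_of_pos_left l hm
  · simpa using hLg

lemma bt_trivial {N t c h γ Lg : ℝ} {b : ℕ → ℝ} (hN : 1 ≤ N) (hLg : 0 ≤ Lg)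
    (hb : ∀ l : ℕ, (l : ℝ) ≤ 2 * N → |b l| ≤ Lg) (J : Finset ℕ) (r d l1 l2 l3 l4 : ℕ) :
    ‖bt N t c h γ b J r d l1 l2 l3 l4‖ ≤ Lg ^ 4 * J.card := by
  unfold bt
  refine (norm_sum_le _ _).trans ?_
  have : ∀ j ∈ J, ‖Zt N t c h γ b (r + d * j) l1 * (starRingEnd ℂ) (Zt N t c h γ b (r + d * j) l2) *
    (starRingEnd ℂ) (Zt N t c h γ b (r + d * j) l3 * (starRingEnd ℂ) (Zt N t c h γ b (r + d * j) l4))‖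
      ≤ Lg ^ 4 := by
    intro j _
    simp only [norm_mul, Complex.norm_conj]
    have hz := fun l => Zt_norm (t := t) (c := c) (h := h) (γ := γ) hN hLg hb (r + d * j) l
    calc _ ≤ Lg * Lg * (Lg * Lg) := by gcongr <;> apply hz
      _ = _ := by ring
  refine (Finset.sum_le_sum this).trans (le_of_eq ?_)
  rw [Finset.sum_const, nsmul_eq_mul]; ring

lemma bt_pos {t c h γ N Lg : ℝ} {b : ℕ → ℝ} (hN : 1 ≤ N) (hh : 0 < h) (hγ0 : 0 < γ)
    (hγ1 : γ < 1) (hsc : Scale ((c * (c - 1)) ^ 2) ((γ * (1 - γ)) ^ 2) t c h γ N) (hLg : 0 ≤ Lg)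
    (hb : ∀ l : ℕ, (l : ℝ) ≤ 2 * N → |b l| ≤ Lg)
    (r d l0 a a' : ℕ) (ha : 0 < a) (ha' : 0 < a') (hd : 0 < d) (J : Finset ℕ) (Lr : ℝ) (hLr : 0 ≤ Lr)
    (hSc : ∀ a ∈ J, ∀ c ∈ J, ∀ b, a ≤ b → b ≤ c → b ∈ J)
    (hlen : ∀ a ∈ J, ∀ c ∈ J, a ≤ c → (c : ℝ) - a + 1 ≤ Lr) :
    ‖bt N t c h γ b J r d (l0 + a + a') (l0 + a) (l0 + a') l0‖ ≤ Lg ^ 4 *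
      (242 * (Lr * √(lam ((γ * (1 - γ)) ^ 2) h γ N * (d ^ 2 * (a * a'))))
      + 7 / √(lam ((γ * (1 - γ)) ^ 2) h γ N * (d ^ 2 * (a * a')))) := by
  classical
  set S := J.filter (fun j => N < (((r + d * j) * l0 : ℕ) : ℝ) ∧
    (((r + d * j) * (l0 + a + a') : ℕ) : ℝ) ≤ 2 * N) with hS
  set coef : ℂ := (b (l0 + a + a') : ℂ) * b (l0 + a) * b (l0 + a') * b l0 with hcoef
  have hmon : ∀ j l l' : ℕ, l ≤ l' → (((r + d * j) * l : ℕ) : ℝ) ≤ (((r + d * j) * l' : ℕ) : ℝ) := by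
    intro j l l' hl
    exact_mod_cast Nat.mul_le_mul_left _ hl
  have hsum : bt N t c h γ b J r d (l0 + a + a') (l0 + a) (l0 + a') l0 =
      coef * ∑ j ∈ S, e (ph t c h γ ((r + d * j) * (l0 + a + a')) - ph t c h γ ((r + d * j) * (l0 + a))
        - ph t c h γ ((r + d * j) * (l0 + a')) + ph t c h γ ((r + d * j) * l0)) := by
    unfold bt
    rw [hS, Finset.sum_filter, Finset.mul_sum]
    apply Finset.sum_congr rfl
    intro j _
    have m1 := hmon j l0 (l0 + a) (by omega)
    have m2 := hmon j l0 (l0 + a') (by omega)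
    have m3 := hmon j (l0 + a) (l0 + a + a') (by omega)
    have m4 := hmon j (l0 + a') (l0 + a + a') (by omega)
    split_ifs with hc
    · have z : ∀ l, l0 ≤ l → l ≤ l0 + a + a' → Zt N t c h γ b (r + d * j) l
          = (b l : ℂ) * e (ph t c h γ ((r + d * j) * l)) := by
        intro l q1 q2
        unfold Zt
        rw [if_pos]
        exact ⟨hc.1.trans_le (hmon j _ _ q1), (hmon j _ _ q2).trans hc.2⟩
      rw [z _ (by omega) le_rfl, z (l0 + a) (by omega) (by omega), z (l0 + a') (by omega) (by omega),
        z l0 le_rfl (by omega)]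
      simp only [map_mul, Complex.conj_ofReal, conj_e, neg_neg]
      rw [sub_eq_add_neg, sub_eq_add_neg, e_add, e_add, e_add]
      ring
    · rw [mul_zero]
      rcases not_and_or.1 hc with hc | hc
      · have : Zt N t c h γ b (r + d * j) l0 = 0 := by
          unfold Zt; rw [if_neg]; exact fun h => hc h.1
        rw [this]; simp
      · have : Zt N t c h γ b (r + d * j) (l0 + a + a') = 0 := by
          unfold Zt; rw [if_neg]; exact fun h => hc h.2
        rw [this]; simp
  rw [hsum]
  have hX : 0 ≤ 242 * (Lr * √(lam ((γ * (1 - γ)) ^ 2) h γ N * (d ^ 2 * (a * a'))))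
      + 7 / √(lam ((γ * (1 - γ)) ^ 2) h γ N * (d ^ 2 * (a * a'))) := by positivity
  rcases S.eq_empty_or_nonempty with h0 | ⟨j0, hj0⟩
  · rw [h0]; simp only [Finset.sum_empty, mul_zero, norm_zero]; positivity
  have hSj : ∀ j ∈ S, N < (((r + d * j) * l0 : ℕ) : ℝ) ∧
    (((r + d * j) * (l0 + a + a') : ℕ) : ℝ) ≤ 2 * N := fun j hj => (Finset.mem_filter.1 hj).2
  have hcn : ‖coef‖ ≤ Lg ^ 4 := by
    have h1 := hSj j0 hj0
    have hm : 1 ≤ r + d * j0 := by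
      rcases Nat.eq_zero_or_pos (r + d * j0) with h0 | h0
      · rw [h0] at h1; simp at h1; linarith
      · exact h0
    have hbl : ∀ l, l ≤ l0 + a + a' → |b l| ≤ Lg := by
      intro l hl
      apply hb
      refine le_trans ?_ h1.2
      exact_mod_cast hl.trans (Nat.le_mul_of_pos_left _ hm)
    rw [hcoef]
    simp only [norm_mul, Complex.norm_real, Real.norm_eq_abs]
    calc _ ≤ Lg * Lg * Lg * Lg := by
          gcongr <;> apply hbl <;> omega
      _ = _ := by ring
  rw [norm_mul]
  refine mul_le_mul hcn ?_ (norm_nonneg _) (by positivity)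
  refine caseA_inner hN hh hγ0 hγ1 hsc r d l0 a a' ha ha' hd S Lr hLr ?_ ?_ hSj
  · intro u hu v hv w huw hwv
    have hu' := hSj u hu
    have hv' := hSj v hv
    rw [hS, Finset.mem_filter]
    refine ⟨hSc u (Finset.mem_filter.1 hu).1 v (Finset.mem_filter.1 hv).1 w huw hwv, ?_, ?_⟩
    · refine hu'.1.trans_le ?_
      exact_mod_cast Nat.mul_le_mul_right _ (by gcongr)
    · refine le_trans ?_ hv'.2
      exact_mod_cast Nat.mul_le_mul_right _ (by gcongr)
  · intro u hu v hv huv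
    exact hlen u (Finset.mem_filter.1 hu).1 v (Finset.mem_filter.1 hv).1 huv

/-- the position in the progression -/
def lpos (ρ d Q1 Q2 i s q : ℕ) : ℕ := ρ + d * (q + Q1 * (s + Q2 * i))

lemma bt_off {t c h γ N Lg : ℝ} {b : ℕ → ℝ} (hN : 1 ≤ N) (hh : 0 < h) (hγ0 : 0 < γ)
    (hγ1 : γ < 1) (hsc : Scale ((c * (c - 1)) ^ 2) ((γ * (1 - γ)) ^ 2) t c h γ N) (hLg : 0 ≤ Lg)
    (hb : ∀ l : ℕ, (l : ℝ) ≤ 2 * N → |b l| ≤ Lg)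
    (r d ρ : ℕ) (hd : 0 < d) (J : Finset ℕ) (Lr : ℝ) (hLr : 0 ≤ Lr)
    (hSc : ∀ a ∈ J, ∀ c ∈ J, ∀ b, a ≤ b → b ≤ c → b ∈ J)
    (hlen : ∀ a ∈ J, ∀ c ∈ J, a ≤ c → (c : ℝ) - a + 1 ≤ Lr)
    (Q1 Q2 i s s' q q' : ℕ) (hs : s < Q2) (hs' : s' < Q2) (hq : q < Q1) (hq' : q' < Q1)
    (hss : s ≠ s') (hqq : q ≠ q') :
    ‖bt N t c h γ b J r d (lpos ρ d Q1 Q2 i s q) (lpos ρ d Q1 Q2 i s q')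
      (lpos ρ d Q1 Q2 i s' q) (lpos ρ d Q1 Q2 i s' q')‖ ≤ Lg ^ 4 *
      (242 * (Lr * √(lam ((γ * (1 - γ)) ^ 2) h γ N * (d ^ 4 * (Q1 ^ 2 * Q2))))
      + 7 / √(lam ((γ * (1 - γ)) ^ 2) h γ N * (d ^ 4 * Q1))) := by
  have main : ∀ s s' q q' : ℕ, s < Q2 → q < Q1 → s' < s → q' < q →
      ‖bt N t c h γ b J r d (lpos ρ d Q1 Q2 i s q) (lpos ρ d Q1 Q2 i s q')
      (lpos ρ d Q1 Q2 i s' q) (lpos ρ d Q1 Q2 i s' q')‖ ≤ Lg ^ 4 *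
      (242 * (Lr * √(lam ((γ * (1 - γ)) ^ 2) h γ N * (d ^ 4 * (Q1 ^ 2 * Q2))))
      + 7 / √(lam ((γ * (1 - γ)) ^ 2) h γ N * (d ^ 4 * Q1))) := by
    intro s s' q q' hs hq hss hqq
    obtain ⟨u, rfl⟩ : ∃ u, s = s' + u := ⟨s - s', by omega⟩
    obtain ⟨v, rfl⟩ : ∃ v, q = q' + v := ⟨q - q', by omega⟩
    have hu : 0 < u := by omega
    have hv : 0 < v := by omega
    have hQ1 : 0 < Q1 := by omega
    have a1 : 0 < d * Q1 * u := by positivity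
    have a2 : 0 < d * v := by positivity
    have hmain := bt_pos hN hh hγ0 hγ1 hsc hLg hb r d (lpos ρ d Q1 Q2 i s' q') (d * Q1 * u) (d * v) a1 a2 hd
      J Lr hLr hSc hlen
    have e1 : lpos ρ d Q1 Q2 i (s' + u) (q' + v) = lpos ρ d Q1 Q2 i s' q' + d * Q1 * u + d * v := by
      unfold lpos; ring
    have e2 : lpos ρ d Q1 Q2 i (s' + u) q' = lpos ρ d Q1 Q2 i s' q' + d * Q1 * u := by
      unfold lpos; ring
    have e3 : lpos ρ d Q1 Q2 i s' (q' + v) = lpos ρ d Q1 Q2 i s' q' + d * v := by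
      unfold lpos; ring
    rw [e1, e2, e3]
    refine hmain.trans ?_
    have hκ' : 0 < γ * (1 - γ) := mul_pos hγ0 (by linarith)
    have hκ : 0 < (γ * (1 - γ)) ^ 2 := by positivity
    have hl := lam_pos (γ := γ) hN hκ hh
    have hdR : (0:ℝ) < d := by exact_mod_cast hd
    have hQR : (0:ℝ) < Q1 := by exact_mod_cast hQ1
    have hu1 : (1:ℝ) ≤ u := by exact_mod_cast hu
    have hv1 : (1:ℝ) ≤ v := by exact_mod_cast hv
    have hu2 : (u:ℝ) ≤ Q2 := by exact_mod_cast (by omega)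
    have hv2 : (v:ℝ) ≤ Q1 := by exact_mod_cast (by omega)
    have eq : (d:ℝ) ^ 2 * (((d * Q1 * u : ℕ) : ℝ) * ((d * v : ℕ) : ℝ)) = d ^ 4 * (Q1 * (u * v)) := by
      push_cast; ring
    rw [eq]
    have l1 : (Q1:ℝ) * (u * v) ≤ Q1 ^ 2 * Q2 := by
      calc (Q1:ℝ) * (u * v) ≤ Q1 * (Q2 * Q1) := by gcongr
        _ = _ := by ring
    have l2 : (Q1:ℝ) ≤ Q1 * (u * v) := by
      have : (1:ℝ) ≤ u * v := one_le_mul_of_one_le_of_one_le hu1 hv1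
      nlinarith
    gcongr
  rcases lt_or_gt_of_ne hss with h1 | h1 <;> rcases lt_or_gt_of_ne hqq with h2 | h2
  · rw [bt_swap1, bt_swap2]
    exact main s' s q' q hs' hq' h1 h2
  · rw [bt_swap2]
    exact main s' s q q' hs' hq h1 h2
  · rw [bt_swap1]
    exact main s s' q' q hs hq' h1 h2
  · exact main s s' q q' hs hq h1 h2

lemma sum_box_count (Q1 Q2 : ℕ) (A E : ℝ) (hA : 0 ≤ A) (hE : 0 ≤ E) (F : ℕ → ℕ → ℕ → ℕ → ℝ)
    (h1 : ∀ q q' s s', F q q' s s' ≤ A)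
    (h2 : ∀ q < Q1, ∀ q' < Q1, ∀ s < Q2, ∀ s' < Q2, s ≠ s' → q ≠ q' → F q q' s s' ≤ E) :
    ∑ q ∈ Finset.range Q1, ∑ q' ∈ Finset.range Q1, ∑ s ∈ Finset.range Q2, ∑ s' ∈ Finset.range Q2,
      F q q' s s' ≤ Q1 * Q2 ^ 2 * A + Q1 ^ 2 * Q2 * A + Q1 ^ 2 * Q2 ^ 2 * E := by
  have : ∀ q ∈ Finset.range Q1, ∀ q' ∈ Finset.range Q1, ∀ s ∈ Finset.range Q2, ∀ s' ∈ Finset.range Q2,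
      F q q' s s' ≤ (if q = q' then A else 0) + (if s = s' then A else 0) + E := by
    intro q hq q' hq' s hs s' hs'
    rw [Finset.mem_range] at *
    by_cases c1 : q = q'
    · rw [if_pos c1]
      have := h1 q q' s s'
      split_ifs <;> linarith
    · by_cases c2 : s = s'
      · rw [if_pos c2, if_neg c1]
        have := h1 q q' s s'
        linarith
      · rw [if_neg c1, if_neg c2]
        have := h2 q hq q' hq' s hs s' hs' c2 c1
        linarith
  refine (Finset.sum_le_sum fun q hq => Finset.sum_le_sum fun q' hq' => Finset.sum_le_sum fun s hs =>
    Finset.sum_le_sum fun s' hs' => this q hq q' hq' s hs s' hs').trans (le_of_eq ?_)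
  simp only [Finset.sum_add_distrib, Finset.sum_const, Finset.card_range, nsmul_eq_mul]
  have i2 : ∑ x ∈ Finset.range Q2, ∑ x' ∈ Finset.range Q2, (if x = x' then A else 0) = Q2 * A := by
    rw [Finset.sum_congr rfl (fun x hx => by rw [Finset.sum_ite_eq, if_pos hx])]
    simp
  have i1 : ∑ x ∈ Finset.range Q1, ∑ x' ∈ Finset.range Q1, (Q2:ℝ) * ((Q2:ℝ) * (if x = x' then A else 0))
      = Q1 * (Q2 * (Q2 * A)) := by
    rw [Finset.sum_congr rfl (fun x hx => by
      rw [← Finset.mul_sum, ← Finset.mul_sum, Finset.sum_ite_eq, if_pos hx])]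
    simp
  rw [i1, i2]; ring

/-- Case A: the box bound -/
lemma caseA {t c h γ N Lg : ℝ} {b : ℕ → ℝ} (hN : 1 ≤ N) (hh : 0 < h) (hγ0 : 0 < γ)
    (hγ1 : γ < 1) (hsc : Scale ((c * (c - 1)) ^ 2) ((γ * (1 - γ)) ^ 2) t c h γ N) (hLg : 0 ≤ Lg)
    (hb : ∀ l : ℕ, (l : ℝ) ≤ 2 * N → |b l| ≤ Lg)
    (r d ρ : ℕ) (hd : 0 < d) (J : Finset ℕ) (Lr : ℝ) (hLr : 0 < Lr)
    (hSc : ∀ a ∈ J, ∀ c ∈ J, ∀ b, a ≤ b → b ≤ c → b ∈ J)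
    (hlen : ∀ a ∈ J, ∀ c ∈ J, a ≤ c → (c : ℝ) - a + 1 ≤ Lr) (hcard : (J.card : ℝ) ≤ Lr)
    (Q1 Q2 I : ℕ) (hQ1 : 0 < Q1) (hQ2 : 0 < Q2) :
    (∑ j ∈ J, ‖∑ k ∈ Finset.range (Q1 * (Q2 * I)), Zt N t c h γ b (r + d * j) (ρ + d * k)‖) ^ 4 ≤
      (Lg * (Lr * (I * (Q1 * Q2)))) ^ 4 * (1 / Q1 + 1 / Q2 +
        242 * √(lam ((γ * (1 - γ)) ^ 2) h γ N * (d ^ 4 * (Q1 ^ 2 * Q2)))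
        + 7 / (Lr * √(lam ((γ * (1 - γ)) ^ 2) h γ N * (d ^ 4 * Q1)))) := by
  have hre : ∀ j, ∑ k ∈ Finset.range (Q1 * (Q2 * I)), Zt N t c h γ b (r + d * j) (ρ + d * k) =
      ∑ i ∈ Finset.range I, ∑ s ∈ Finset.range Q2, ∑ q ∈ Finset.range Q1,
        Zt N t c h γ b (r + d * j) (lpos ρ d Q1 Q2 i s q) := by
    intro j
    rw [sum_range_mul_eq, sum_range_mul_eq]
    rfl
  simp_rw [hre]
  refine (box_total J I Q1 Q2
    (fun i j s q => Zt N t c h γ b (r + d * j) (lpos ρ d Q1 Q2 i s q))).trans ?_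
  have hQ1R : (0:ℝ) < Q1 := by exact_mod_cast hQ1
  have hQ2R : (0:ℝ) < Q2 := by exact_mod_cast hQ2
  set U := √(lam ((γ * (1 - γ)) ^ 2) h γ N * (d ^ 4 * (Q1 ^ 2 * Q2)))
  set V := √(lam ((γ * (1 - γ)) ^ 2) h γ N * (d ^ 4 * Q1))
  have hU : 0 ≤ U := Real.sqrt_nonneg _
  have hV : 0 ≤ V := Real.sqrt_nonneg _
  have hin : ∀ i ∈ Finset.range I, ∑ q ∈ Finset.range Q1, ∑ q' ∈ Finset.range Q1,
        ∑ s ∈ Finset.range Q2, ∑ s' ∈ Finset.range Q2,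
        ‖bt N t c h γ b J r d (lpos ρ d Q1 Q2 i s q) (lpos ρ d Q1 Q2 i s q')
      (lpos ρ d Q1 Q2 i s' q) (lpos ρ d Q1 Q2 i s' q')‖ ≤
      Q1 * Q2 ^ 2 * (Lg ^ 4 * Lr) + Q1 ^ 2 * Q2 * (Lg ^ 4 * Lr) + Q1 ^ 2 * Q2 ^ 2 * (Lg ^ 4 *
        (242 * (Lr * U) + 7 / V)) := by
    intro i _
    apply sum_box_count Q1 Q2 (Lg ^ 4 * Lr) (Lg ^ 4 * (242 * (Lr * U) + 7 / V)) (by positivity) (by positivity)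
      (fun q q' s s' => ‖bt N t c h γ b J r d (lpos ρ d Q1 Q2 i s q) (lpos ρ d Q1 Q2 i s q')
      (lpos ρ d Q1 Q2 i s' q) (lpos ρ d Q1 Q2 i s' q')‖)
    · intro q q' s s'
      refine (bt_trivial hN hLg hb _ _ _ _ _ _ _).trans ?_
      gcongr
    · intro q hq q' hq' s hs s' hs' n1 n2
      exact bt_off hN hh hγ0 hγ1 hsc hLg hb r d ρ hd J Lr hLr.le hSc hlen Q1 Q2 i s s' q q' hs hs' hq hq' n1 n2
  have hin2 := Finset.sum_le_sum hin
  rw [Finset.sum_const, Finset.card_range, nsmul_eq_mul] at hin2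
  unfold bt at hin2
  calc _ ≤ ((J.card : ℝ) * I) ^ 3 * (((Q1 : ℝ) * Q2) ^ 2 * (I * (Q1 * Q2 ^ 2 * (Lg ^ 4 * Lr) + Q1 ^ 2 * Q2 * (Lg ^ 4 * Lr) + Q1 ^ 2 * Q2 ^ 2 * (Lg ^ 4 *
        (242 * (Lr * U) + 7 / V))))) := by
        gcongr
    _ ≤ (Lr * I) ^ 3 * (((Q1 : ℝ) * Q2) ^ 2 * (I * (Q1 * Q2 ^ 2 * (Lg ^ 4 * Lr) + Q1 ^ 2 * Q2 * (Lg ^ 4 * Lr) + Q1 ^ 2 * Q2 ^ 2 * (Lg ^ 4 *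
        (242 * (Lr * U) + 7 / V))))) := by
        gcongr
    _ = _ := by
      rcases hV.eq_or_lt with h0 | h0
      · rw [← h0]; field_simp; ring
      · field_simp; ring

open scoped Classical in
/-- the admissible residues of the second variable -/
noncomputable def Pr (d : ℕ) (a : ℤ) (r : ℕ) : Finset ℕ :=
  (Finset.range d).filter (fun ρ => (d : ℤ) ∣ ((r * ρ : ℕ) : ℤ) - a)

lemma Pr_card {d : ℕ} {a : ℤ} (hda : Int.gcd (d : ℤ) a = 1) (r : ℕ) : (Pr d a r).card ≤ 1 := by
  rw [Finset.card_le_one]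
  intro x hx y hy
  simp only [Pr, Finset.mem_filter, Finset.mem_range] at hx hy
  have hcop : IsCoprime (d : ℤ) (r : ℤ) := by
    have h1 : IsCoprime (d : ℤ) a := Int.isCoprime_iff_gcd_eq_one.2 hda
    obtain ⟨u, v, huv⟩ := h1
    obtain ⟨w, hw⟩ := hx.2
    push_cast at hw
    refine ⟨u - v * w, v * x, ?_⟩
    have : a = r * x - d * w := by linarith
    rw [this] at huv
    linarith
  have h2 : (d : ℤ) ∣ (r : ℤ) * ((x : ℤ) - y) := by
    have := dvd_sub hx.2 hy.2
    push_cast at this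
    have e1 : (r : ℤ) * ((x : ℤ) - y) = r * x - a - (r * y - a) := by ring
    rw [e1]; exact this
  have h3 := hcop.dvd_of_dvd_mul_left h2
  have h4 : (x : ℤ) ≡ y [ZMOD d] := (Int.modEq_iff_dvd.2 h3).symm
  have h5 : x ≡ y [MOD d] := (Int.natCast_modEq_iff).1 h4
  exact Nat.ModEq.eq_of_lt_of_lt h5 hx.1 hy.1

lemma Pr_congr {d : ℕ} {a : ℤ} (r j : ℕ) : Pr d a (r + d * j) = Pr d a r := by
  unfold Pr
  apply Finset.filter_congr
  intro ρ _
  have : (((r + d * j) * ρ : ℕ) : ℤ) - a = (((r * ρ : ℕ) : ℤ) - a) + d * (j * ρ) := by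
    push_cast; ring
  rw [this]
  exact dvd_add_left (dvd_mul_right _ _)

open scoped Classical in
lemma residue_split (f : ℕ → ℂ) (d : ℕ) (a : ℤ) (m B L : ℕ)
    (h0 : ∀ l, d * B ≤ l → f l = 0) (h1 : ∀ l, l = 0 ∨ L < l → f l = 0) :
    ∑ l ∈ (Finset.Icc 1 L).filter (fun l => (d : ℤ) ∣ ((m * l : ℕ) : ℤ) - a), f l =
      ∑ ρ ∈ Pr d a m, ∑ k ∈ Finset.range B, f (ρ + d * k) := by
  have e1 : ∑ l ∈ (Finset.Icc 1 L).filter (fun l => (d : ℤ) ∣ ((m * l : ℕ) : ℤ) - a), f l =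
      ∑ l ∈ Finset.range (d * B), if (d : ℤ) ∣ ((m * l : ℕ) : ℤ) - a then f l else 0 := by
    rw [Finset.sum_filter]
    trans ∑ l ∈ Finset.Icc 1 L ∪ Finset.range (d * B),
        if (d : ℤ) ∣ ((m * l : ℕ) : ℤ) - a then f l else 0
    · apply Finset.sum_subset Finset.subset_union_left
      intro x _ hx
      simp only [Finset.mem_Icc, not_and_or, not_le] at hx
      rw [h1 x (by omega)]; simp
    · symm
      apply Finset.sum_subset Finset.subset_union_right
      intro x _ hx
      simp only [Finset.mem_range, not_lt] at hx
      rw [h0 x hx]; simp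
  rw [e1, sum_range_mul_eq, Finset.sum_comm]
  unfold Pr
  rw [Finset.sum_filter]
  apply Finset.sum_congr rfl
  intro ρ _
  have : ∀ k, ((d : ℤ) ∣ ((m * (ρ + d * k) : ℕ) : ℤ) - a) ↔ ((d : ℤ) ∣ ((m * ρ : ℕ) : ℤ) - a) := by
    intro k
    have : ((m * (ρ + d * k) : ℕ) : ℤ) - a = (((m * ρ : ℕ) : ℤ) - a) + d * (m * k) := by
      push_cast; ring
    rw [this]
    exact dvd_add_left (dvd_mul_right _ _)
  simp only [this]
  split_ifs <;> simp

lemma Zt_zero_of {N t c h γ : ℝ} {b : ℕ → ℝ} {m l : ℕ}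
    (hl : ¬ (N < ((m * l : ℕ) : ℝ) ∧ ((m * l : ℕ) : ℝ) ≤ 2 * N)) : Zt N t c h γ b m l = 0 := by
  unfold Zt; rw [if_neg hl]

open scoped Classical in
/-- the sum attached to one pair `(h,d)` -/
noncomputable def Tsum (N t c h γ : ℝ) (b : ℕ → ℝ) (M : ℝ) (d : ℕ) (a : ℤ) : ℝ :=
  ∑ m ∈ Finset.Ioc ⌊M⌋₊ ⌊2 * M⌋₊,
    ‖∑ l ∈ (Finset.Icc 1 ⌊2 * N⌋₊).filter (fun l => (d : ℤ) ∣ ((m * l : ℕ) : ℤ) - a),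
      Zt N t c h γ b m l‖

lemma mem_dyadic {M : ℝ} (hM : 0 < M) (m : ℕ) :
    m ∈ Finset.Ioc ⌊M⌋₊ ⌊2 * M⌋₊ ↔ M < m ∧ (m : ℝ) ≤ 2 * M := by
  rw [Finset.mem_Ioc, Nat.floor_lt hM.le, Nat.le_floor_iff (by linarith)]

lemma inner_split {N t c h γ : ℝ} {b : ℕ → ℝ} (hN : 1 ≤ N) {M : ℝ} (hM : 0 < M) (d : ℕ) (a : ℤ)
    (B : ℕ) (hB : 2 * N < M * (d * B)) (m : ℕ) (hm : M < m) :
    ‖∑ l ∈ (Finset.Icc 1 ⌊2 * N⌋₊).filter (fun l => (d : ℤ) ∣ ((m * l : ℕ) : ℤ) - a),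
      Zt N t c h γ b m l‖ ≤ ∑ ρ ∈ Pr d a m, ‖∑ k ∈ Finset.range B, Zt N t c h γ b m (ρ + d * k)‖ := by
  classical
  have hm1 : (1 : ℝ) ≤ m := by
    have : 0 < (m : ℝ) := by linarith
    exact_mod_cast this
  have key := residue_split (fun l => Zt N t c h γ b m l) d a m B ⌊2 * N⌋₊ ?_ ?_
  · refine le_trans (le_of_eq ?_) (norm_sum_le _ _)
    rw [← key]
  · intro l hl
    apply Zt_zero_of
    rintro ⟨_, h2⟩
    have hl' : ((d * B : ℕ) : ℝ) ≤ l := by exact_mod_cast hl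
    push_cast at hl' h2
    have : M * (d * B) ≤ m * l := by gcongr
    linarith
  · intro l hl
    apply Zt_zero_of
    rintro ⟨h1, h2⟩
    rcases hl with hl | hl
    · rw [hl] at h1; simp at h1; linarith
    · rw [Nat.floor_lt (by linarith)] at hl
      push_cast at h2
      nlinarith

/-- the progression of first variables -/
noncomputable def Jr (M : ℝ) (d r B : ℕ) : Finset ℕ :=
  (Finset.range B).filter (fun j => r + d * j ∈ Finset.Ioc ⌊M⌋₊ ⌊2 * M⌋₊)

lemma dyadic_split (M : ℝ) (d B : ℕ) (hB : ⌊2 * M⌋₊ < d * B) (f : ℕ → ℝ) :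
    ∑ m ∈ Finset.Ioc ⌊M⌋₊ ⌊2 * M⌋₊, f m =
      ∑ r ∈ Finset.range d, ∑ j ∈ Jr M d r B, f (r + d * j) := by
  have e1 : ∑ m ∈ Finset.Ioc ⌊M⌋₊ ⌊2 * M⌋₊, f m =
      ∑ m ∈ Finset.range (d * B), if m ∈ Finset.Ioc ⌊M⌋₊ ⌊2 * M⌋₊ then f m else 0 := by
    rw [← Finset.sum_filter]
    apply Finset.sum_congr _ (fun _ _ => rfl)
    ext x
    simp only [Finset.mem_filter, Finset.mem_range, Finset.mem_Ioc]
    omega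
  rw [e1, sum_range_mul_eq, Finset.sum_comm]
  apply Finset.sum_congr rfl
  intro r _
  unfold Jr
  rw [Finset.sum_filter]

lemma caseA_T {t c h γ N Lg M : ℝ} {b : ℕ → ℝ} (hN : 1 ≤ N) (hh : 0 < h) (hγ0 : 0 < γ)
    (hγ1 : γ < 1) (hsc : Scale ((c * (c - 1)) ^ 2) ((γ * (1 - γ)) ^ 2) t c h γ N) (hLg : 0 ≤ Lg)
    (hb : ∀ l : ℕ, (l : ℝ) ≤ 2 * N → |b l| ≤ Lg) (hM : 0 < M)
    (d : ℕ) (hd : 0 < d) (a : ℤ) (hda : Int.gcd (d : ℤ) a = 1)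
    (Q1 Q2 I : ℕ) (hQ1 : 0 < Q1) (hQ2 : 0 < Q2) (hI : 2 * N < M * (d * (Q1 * (Q2 * I))))
    (Br : ℝ) (hBr0 : 0 ≤ Br) (hBr : 1 / Q1 + 1 / Q2 +
        242 * √(lam ((γ * (1 - γ)) ^ 2) h γ N * (d ^ 4 * (Q1 ^ 2 * Q2)))
        + 7 / ((M / d + 1) * √(lam ((γ * (1 - γ)) ^ 2) h γ N * (d ^ 4 * Q1))) ≤ Br ^ 4) :
    Tsum N t c h γ b M d a ≤ d * (Lg * ((M / d + 1) * (I * (Q1 * Q2))) * Br) := by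
  have hd' : (0:ℝ) < d := by exact_mod_cast hd
  set E := Lg * ((M / d + 1) * (I * (Q1 * Q2))) * Br with hE
  have hE0 : 0 ≤ E := by rw [hE]; positivity
  have h1 : ∀ r : ℕ, ∀ ρ : ℕ, ∑ j ∈ Jr M d r (⌊2 * M⌋₊ + 1),
      ‖∑ k ∈ Finset.range (Q1 * (Q2 * I)), Zt N t c h γ b (r + d * j) (ρ + d * k)‖ ≤ E := by
    intro r ρ
    have hmem : ∀ j ∈ Jr M d r (⌊2 * M⌋₊ + 1), M < r + d * j ∧ (r + d * j : ℝ) ≤ 2 * M := by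
      intro j hj
      have := (mem_dyadic hM _).1 (Finset.mem_filter.1 hj).2
      push_cast at this; exact this
    have hconn : ∀ a ∈ Jr M d r (⌊2 * M⌋₊ + 1), ∀ c ∈ Jr M d r (⌊2 * M⌋₊ + 1),
        ∀ b, a ≤ b → b ≤ c → b ∈ Jr M d r (⌊2 * M⌋₊ + 1) := by
      intro x hx y hy z hxz hzy
      simp only [Jr, Finset.mem_filter, Finset.mem_range, Finset.mem_Ioc] at hx hy ⊢
      have i1 : d * x ≤ d * z := Nat.mul_le_mul_left _ hxz
      have i2 : d * z ≤ d * y := Nat.mul_le_mul_left _ hzy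
      omega
    have hlen : ∀ a ∈ Jr M d r (⌊2 * M⌋₊ + 1), ∀ c ∈ Jr M d r (⌊2 * M⌋₊ + 1), a ≤ c →
        (c : ℝ) - a + 1 ≤ M / d + 1 := by
      intro x hx y hy hxy
      have i1 := (hmem x hx).1
      have i2 := (hmem y hy).2
      have : (y : ℝ) - x ≤ M / d := by
        rw [le_div_iff₀ hd']; nlinarith
      linarith
    have hcard : ((Jr M d r (⌊2 * M⌋₊ + 1)).card : ℝ) ≤ M / d + 1 := by
      rcases (Jr M d r (⌊2 * M⌋₊ + 1)).eq_empty_or_nonempty with h0 | h0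
      · rw [h0]; simp; positivity
      · have j1 := hlen _ (Finset.min'_mem _ h0) _ (Finset.max'_mem _ h0) (Finset.min'_le_max' _ h0)
        have j2 : (Jr M d r (⌊2 * M⌋₊ + 1)).card ≤
            (Finset.Icc ((Jr M d r (⌊2 * M⌋₊ + 1)).min' h0) ((Jr M d r (⌊2 * M⌋₊ + 1)).max' h0)).card := by
          apply Finset.card_le_card
          intro x hx
          exact Finset.mem_Icc.2 ⟨Finset.min'_le _ _ hx, Finset.le_max' _ _ hx⟩
        rw [Nat.card_Icc] at j2
        have j3 := Finset.min'_le_max' _ h0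
        have j4 : ((Jr M d r (⌊2 * M⌋₊ + 1)).card : ℝ) + ((Jr M d r (⌊2 * M⌋₊ + 1)).min' h0 : ℕ)
            ≤ ((Jr M d r (⌊2 * M⌋₊ + 1)).max' h0 : ℕ) + 1 := by
          exact_mod_cast (by omega)
        linarith
    have := caseA hN hh hγ0 hγ1 hsc hLg hb r d ρ hd (Jr M d r (⌊2 * M⌋₊ + 1)) (M / d + 1)
      (by positivity) hconn hlen hcard Q1 Q2 I hQ1 hQ2
    refine le_of_pow_le_pow_left₀ (n := 4) (by norm_num) hE0 (this.trans ?_)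
    rw [hE, mul_pow _ Br]
    gcongr
  unfold Tsum
  calc _ ≤ ∑ m ∈ Finset.Ioc ⌊M⌋₊ ⌊2 * M⌋₊, ∑ ρ ∈ Pr d a m,
          ‖∑ k ∈ Finset.range (Q1 * (Q2 * I)), Zt N t c h γ b m (ρ + d * k)‖ := by
        apply Finset.sum_le_sum
        intro m hm
        exact inner_split hN hM d a _ (by push_cast; exact hI) m ((mem_dyadic hM m).1 hm).1
    _ = ∑ r ∈ Finset.range d, ∑ j ∈ Jr M d r (⌊2 * M⌋₊ + 1), ∑ ρ ∈ Pr d a r,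
          ‖∑ k ∈ Finset.range (Q1 * (Q2 * I)), Zt N t c h γ b (r + d * j) (ρ + d * k)‖ := by
        rw [dyadic_split M d (⌊2 * M⌋₊ + 1) (by nlinarith)]
        simp only [Pr_congr]
    _ ≤ ∑ r ∈ Finset.range d, E := by
        apply Finset.sum_le_sum
        intro r _
        rw [Finset.sum_comm]
        calc _ ≤ ∑ ρ ∈ Pr d a r, E := Finset.sum_le_sum (fun ρ _ => h1 r ρ)
          _ ≤ E := by
            rw [Finset.sum_const, nsmul_eq_mul]
            have : ((Pr d a r).card : ℝ) ≤ 1 := by exact_mod_cast Pr_card hda r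
            nlinarith
    _ = _ := by simp

lemma caseC_m {t c h γ N Lg : ℝ} {b : ℕ → ℝ} (hN : 1 ≤ N) (hh : 0 < h) (hγ0 : 0 < γ)
    (hγ1 : γ < 1) (hsc : Scale (c * (c - 1)) (γ * (1 - γ)) t c h γ N) (hLg : 0 ≤ Lg)
    (hb : ∀ l : ℕ, (l : ℝ) ≤ 2 * N → |b l| ≤ Lg) (hb0 : ∀ l, 0 ≤ b l) (hbm : Monotone b)
    (d : ℕ) (hd : 0 < d) (m : ℕ) (hm : 0 < m) (ρ B : ℕ) :
    ‖∑ k ∈ Finset.range B, Zt N t c h γ b m (ρ + d * k)‖ ≤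
      Lg * (242 * ((N / (m * d) + 1) * √(lam (γ * (1 - γ)) h γ N * (m * d) ^ 2))
      + 7 / √(lam (γ * (1 - γ)) h γ N * (m * d) ^ 2)) := by
  classical
  unfold Zt
  rw [← Finset.sum_filter]
  set S := (Finset.range B).filter (fun k => N < ((m * (ρ + d * k) : ℕ) : ℝ) ∧
    ((m * (ρ + d * k) : ℕ) : ℝ) ≤ 2 * N) with hS
  have hmem : ∀ k, k ∈ S ↔ k < B ∧ N < ((m * (ρ + d * k) : ℕ) : ℝ) ∧
    ((m * (ρ + d * k) : ℕ) : ℝ) ≤ 2 * N := by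
    intro k; rw [hS]; simp
  apply abel_bd S (fun k => e (ph t c h γ (m * (ρ + d * k)))) _ (fun k => b (ρ + d * k)) Lg
  · intro n _; exact hb0 _
  · intro n hn
    refine (le_abs_self _).trans (hb _ (le_trans ?_ ((hmem n).1 hn).2.2))
    exact_mod_cast Nat.le_mul_of_pos_left _ hm
  · exact hLg
  · intro x _ y _ hxy
    apply hbm
    exact Nat.add_le_add_left (Nat.mul_le_mul_left _ hxy) _
  · intro j
    apply caseC_inner hN hh hγ0 hγ1 hsc m d ρ hm hd
    · intro x hx y hy z hxz hzy
      rw [Finset.mem_filter, hmem] at hx hy ⊢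
      have i1 : ((m * (ρ + d * x) : ℕ) : ℝ) ≤ ((m * (ρ + d * z) : ℕ) : ℝ) := by
        have : m * (ρ + d * x) ≤ m * (ρ + d * z) := by gcongr
        exact_mod_cast this
      have i2 : ((m * (ρ + d * z) : ℕ) : ℝ) ≤ ((m * (ρ + d * y) : ℕ) : ℝ) := by
        have : m * (ρ + d * z) ≤ m * (ρ + d * y) := by gcongr
        exact_mod_cast this
      refine ⟨⟨lt_of_le_of_lt hzy hy.1.1, lt_of_lt_of_le hx.1.2.1 i1, i2.trans hy.1.2.2⟩, hx.2.trans hxz⟩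
    · intro k hk
      rw [Finset.mem_filter, hmem] at hk
      exact hk.1.2

lemma caseC_T {t c h γ N Lg M : ℝ} {b : ℕ → ℝ} (hN : 1 ≤ N) (hh : 0 < h) (hγ0 : 0 < γ)
    (hγ1 : γ < 1) (hsc : Scale (c * (c - 1)) (γ * (1 - γ)) t c h γ N) (hLg : 0 ≤ Lg)
    (hb : ∀ l : ℕ, (l : ℝ) ≤ 2 * N → |b l| ≤ Lg) (hb0 : ∀ l, 0 ≤ b l) (hbm : Monotone b) (hM : 0 < M)
    (d : ℕ) (hd : 0 < d) (a : ℤ) (hda : Int.gcd (d : ℤ) a = 1) (E : ℝ) (hE0 : 0 ≤ E)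
    (hE : ∀ x : ℝ, M * d ≤ x → x ≤ 2 * (M * d) → 
      242 * ((N / x + 1) * √(lam (γ * (1 - γ)) h γ N * x ^ 2))
      + 7 / √(lam (γ * (1 - γ)) h γ N * x ^ 2) ≤ E) :
    Tsum N t c h γ b M d a ≤ 2 * M * (Lg * E) := by
  have hd' : (0:ℝ) < d := by exact_mod_cast hd
  obtain ⟨B, hB⟩ := exists_nat_gt (2 * N / (M * d))
  rw [div_lt_iff₀ (by positivity)] at hB
  unfold Tsum
  calc _ ≤ ∑ m ∈ Finset.Ioc ⌊M⌋₊ ⌊2 * M⌋₊, Lg * E := by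
        apply Finset.sum_le_sum
        intro m hm
        have hm' := (mem_dyadic hM m).1 hm
        have hm0 : 0 < m := by
          have : (0:ℝ) < m := by linarith
          exact_mod_cast this
        refine (inner_split hN hM d a B (by linarith) m hm'.1).trans ?_
        calc _ ≤ ∑ ρ ∈ Pr d a m, Lg * E := by
              apply Finset.sum_le_sum
              intro ρ _
              refine (caseC_m hN hh hγ0 hγ1 hsc hLg hb hb0 hbm d hd m hm0 ρ B).trans ?_
              refine mul_le_mul_of_nonneg_left ?_ hLg
              apply hE
              · have := hm'.1; gcongr
              · nlinarith [hm'.2]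
          _ ≤ Lg * E := by
            rw [Finset.sum_const, nsmul_eq_mul]
            have : ((Pr d a m).card : ℝ) ≤ 1 := by exact_mod_cast Pr_card hda m
            have : 0 ≤ Lg * E := by positivity
            nlinarith
    _ ≤ _ := by
      rw [Finset.sum_const, nsmul_eq_mul]
      refine mul_le_mul_of_nonneg_right ?_ (by positivity)
      rw [Nat.card_Ioc]
      calc ((⌊2 * M⌋₊ - ⌊M⌋₊ : ℕ) : ℝ) ≤ ⌊2 * M⌋₊ := by exact_mod_cast Nat.sub_le _ _
        _ ≤ _ := Nat.floor_le (by linarith)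

lemma scale_of {κ1 κ2 t c h γ N X ε : ℝ} (hκ1 : 0 < κ1) (hκ2 : 0 < κ2) (hc1 : 1 < c) (hc3 : c < 3)
    (hγ0 : 9 / 10 < γ) (hγ1 : γ < 1) (hε0 : 0 < ε) (hε : ε ≤ 1 / 100) (hX1 : 1 ≤ X)
    (hX : (64 * κ1 / κ2) ^ 2 ≤ X) (hXN : X ^ (1 - ε) ≤ N) (hNX : N ≤ X)
    (ht : |t| ≤ X ^ ((1 : ℝ) / 4 - c)) (hh : 1 ≤ h) : Scale κ1 κ2 t c h γ N := by
  intro η ξ h1 h2 h3 h4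
  have hX0 : 0 < X := by linarith
  have hN1 : 1 ≤ N := le_trans (Real.one_le_rpow hX1 (by linarith)) hXN
  have hN0 : 0 < N := by linarith
  have hη0 : 0 < η := by linarith
  have e1 : η ^ (c - 2) ≤ 8 * X ^ c * N ^ (-2 : ℝ) := by
    rw [sub_eq_add_neg, Real.rpow_add hη0]
    have i1 : η ^ c ≤ 8 * X ^ c := by
      calc η ^ c ≤ (2 * X) ^ c := Real.rpow_le_rpow hη0.le (by linarith) (by linarith)
        _ = 2 ^ c * X ^ c := Real.mul_rpow (by norm_num) hX0.le
        _ ≤ 8 * X ^ c := by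
          have : (2:ℝ) ^ c ≤ 8 := by
            calc (2:ℝ) ^ c ≤ 2 ^ (3:ℝ) := Real.rpow_le_rpow_of_exponent_le (by norm_num) hc3.le
              _ = 8 := by norm_num
          gcongr
    have i2 : η ^ (-2 : ℝ) ≤ N ^ (-2 : ℝ) := Real.rpow_le_rpow_of_nonpos hN0 h1 (by norm_num)
    gcongr
  have e2 : |t * κ1 * η ^ (c - 2)| ≤ 8 * κ1 * X ^ ((1:ℝ)/4) * N ^ (-2 : ℝ) := by
    rw [abs_mul, abs_mul, abs_of_pos hκ1, abs_of_pos (Real.rpow_pos_of_pos hη0 _)]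
    calc |t| * κ1 * η ^ (c - 2) ≤ X ^ ((1 : ℝ) / 4 - c) * κ1 * (8 * X ^ c * N ^ (-2 : ℝ)) := by gcongr
      _ = 8 * κ1 * (X ^ ((1 : ℝ) / 4 - c) * X ^ c) * N ^ (-2 : ℝ) := by ring
      _ = _ := by rw [← Real.rpow_add hX0]; ring_nf
  have e3 : (1/4 : ℝ) * (N ^ γ * N ^ (-2 : ℝ)) ≤ ξ ^ (γ - 2) := by
    have i1 : (2 * N) ^ (γ - 2) ≤ ξ ^ (γ - 2) :=
      Real.rpow_le_rpow_of_nonpos (by linarith) h4 (by linarith)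
    refine le_trans ?_ i1
    rw [Real.mul_rpow (by norm_num) hN0.le, sub_eq_add_neg γ 2, Real.rpow_add hN0]
    have : (1/4 : ℝ) ≤ 2 ^ (γ + -2) := by
      calc (1/4 : ℝ) = 2 ^ (-2 : ℝ) := by
            rw [Real.rpow_neg (by norm_num)]; norm_num
        _ ≤ _ := Real.rpow_le_rpow_of_exponent_le (by norm_num) (by linarith)
    gcongr
  have e4 : X ^ ((3:ℝ)/4) ≤ N ^ γ := by
    calc X ^ ((3:ℝ)/4) ≤ X ^ ((1 - ε) * γ) :=
          Real.rpow_le_rpow_of_exponent_le hX1 (by nlinarith)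
      _ = (X ^ (1 - ε)) ^ γ := Real.rpow_mul hX0.le _ _
      _ ≤ N ^ γ := Real.rpow_le_rpow (by positivity) hXN (by linarith)
  have e5 : 64 * κ1 / κ2 ≤ X ^ ((1:ℝ)/2) := by
    rw [← Real.sqrt_eq_rpow]
    exact Real.le_sqrt_of_sq_le hX
  have e6 : 64 * κ1 * X ^ ((1:ℝ)/4) ≤ κ2 * N ^ γ := by
    rw [div_le_iff₀ hκ2] at e5
    calc 64 * κ1 * X ^ ((1:ℝ)/4) ≤ X ^ ((1:ℝ)/2) * κ2 * X ^ ((1:ℝ)/4) := by gcongr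
      _ = κ2 * (X ^ ((1:ℝ)/2) * X ^ ((1:ℝ)/4)) := by ring
      _ = κ2 * X ^ ((3:ℝ)/4) := by rw [← Real.rpow_add hX0]; norm_num
      _ ≤ _ := by gcongr
  have hN2 : 0 < N ^ (-2 : ℝ) := Real.rpow_pos_of_pos hN0 _
  calc _ ≤ 8 * κ1 * X ^ ((1:ℝ)/4) * N ^ (-2 : ℝ) := e2
    _ = 1 / 8 * (64 * κ1 * X ^ ((1:ℝ)/4)) * N ^ (-2 : ℝ) := by ring
    _ ≤ 1 / 8 * (κ2 * N ^ γ) * N ^ (-2 : ℝ) := by gcongr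
    _ = 1 / 2 * (κ2 * 1 * (1/4 * (N ^ γ * N ^ (-2 : ℝ)))) := by ring
    _ ≤ _ := by gcongr

lemma lam_lower {κ h γ N : ℝ} (hκ : 0 < κ) (hN : 1 ≤ N) (hh : 1 ≤ h) (hγ0 : 0 < γ) :
    κ / 8 * N ^ (γ - 2) ≤ lam κ h γ N := by
  unfold lam
  rw [Real.mul_rpow (by norm_num) (by linarith)]
  have : (1/4 : ℝ) ≤ 2 ^ (γ - 2) := by
    calc (1/4 : ℝ) = 2 ^ (-2 : ℝ) := by
          rw [Real.rpow_neg (by norm_num)]; norm_num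
      _ ≤ _ := Real.rpow_le_rpow_of_exponent_le (by norm_num) (by linarith)
  have hp : 0 < N ^ (γ - 2) := Real.rpow_pos_of_pos (by linarith) _
  calc κ / 8 * N ^ (γ - 2) = κ * 1 * (1/4 * N ^ (γ - 2)) / 2 := by ring
    _ ≤ _ := by gcongr

lemma lam_upper {κ h γ N ε : ℝ} (hκ : 0 < κ) (hκ1 : κ ≤ 1) (hN : 1 ≤ N) (hh0 : 0 ≤ h)
    (hh : h ≤ N ^ (1 - γ + ε)) (hγ1 : γ < 1) :
    lam κ h γ N ≤ N ^ (-1 + ε) := by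
  unfold lam
  have hN0 : 0 < N := by linarith
  have i1 : (2 * N) ^ (γ - 2) ≤ N ^ (γ - 2) :=
    Real.rpow_le_rpow_of_nonpos hN0 (by linarith) (by linarith)
  have hp : 0 < N ^ (γ - 2) := Real.rpow_pos_of_pos hN0 _
  calc κ * h * (2 * N) ^ (γ - 2) / 2 ≤ 1 * N ^ (1 - γ + ε) * N ^ (γ - 2) / 2 := by gcongr
    _ = N ^ (-1 + ε) / 2 := by rw [one_mul, ← Real.rpow_add hN0]; ring_nf
    _ ≤ _ := by
      have : 0 < N ^ (-1 + ε) := Real.rpow_pos_of_pos hN0 _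
      linarith

lemma caseC_bd {t c h γ N Lg M ε : ℝ} {b : ℕ → ℝ} (hN : 1 ≤ N) (hh : 1 ≤ h) (hγ0 : 865/886 < γ)
    (hγ1 : γ < 1) (hhH : h ≤ N ^ (1 - γ + ε)) (hε0 : 0 < ε) (hε : ε ≤ (1 - γ) / 100)
    (hsc : Scale (c * (c - 1)) (γ * (1 - γ)) t c h γ N) (hLg : 0 ≤ Lg)
    (hb : ∀ l : ℕ, (l : ℝ) ≤ 2 * N → |b l| ≤ Lg) (hb0 : ∀ l, 0 ≤ b l) (hbm : Monotone b) (hM : 0 < M)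
    (d : ℕ) (hd : 0 < d) (a : ℤ) (hda : Int.gcd (d : ℤ) a = 1)
    (hMd : M * d ≤ N ^ (1 / 2 - 11 / 10 * (1 - γ))) :
    Tsum N t c h γ b M d a ≤ (1452 + 14 / √(γ * (1 - γ) / 8)) * Lg * N ^ (1 - 105 / 100 * (1 - γ)) / d := by
  have hN0 : 0 < N := by linarith
  have hd' : (0:ℝ) < d := by exact_mod_cast hd
  have hκ : 0 < γ * (1 - γ) := mul_pos (by linarith) (by linarith)
  have hκ1 : γ * (1 - γ) ≤ 1 := by nlinarith
  set l := lam (γ * (1 - γ)) h γ N with hl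
  have hlp : 0 < l := lam_pos hN hκ (by linarith)
  have hsl : 0 < √l := Real.sqrt_pos.2 hlp
  set c0 := √(γ * (1 - γ) / 8) with hc0
  have hc0p : 0 < c0 := Real.sqrt_pos.2 (by positivity)
  have hup : √l ≤ N ^ ((-1 + ε) / 2) := by
    rw [Real.sqrt_le_left (by positivity), ← Real.rpow_natCast, ← Real.rpow_mul hN0.le]
    have := lam_upper hκ hκ1 hN (by linarith) hhH hγ1
    refine this.trans (le_of_eq ?_)
    congr 1; push_cast; ring
  have hlo : c0 * N ^ ((γ - 2) / 2) ≤ √l := by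
    have := lam_lower (γ := γ) hκ hN hh (by linarith)
    have h2 := Real.sqrt_le_sqrt this
    rw [Real.sqrt_mul (by positivity)] at h2
    refine le_trans (le_of_eq ?_) h2
    rw [Real.sqrt_eq_rpow (N ^ (γ - 2)), ← Real.rpow_mul hN0.le]
    congr 2; ring
  set y := M * d with hy
  have hy0 : 0 < y := by positivity
  have hyN : y ≤ N := hMd.trans (by
    calc N ^ (1 / 2 - 11 / 10 * (1 - γ)) ≤ N ^ (1:ℝ) :=
          Real.rpow_le_rpow_of_exponent_le hN (by linarith)
      _ = N := Real.rpow_one N)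
  have main := caseC_T hN (by linarith) (by linarith) hγ1 hsc hLg hb hb0 hbm hM d hd a hda
    (726 * N ^ ((1 + ε) / 2) + 7 / c0 * N ^ (1 - γ / 2) / y) (by positivity) ?_
  · refine main.trans ?_
    have i1 : y * N ^ ((1 + ε) / 2) ≤ N ^ (1 - 105 / 100 * (1 - γ)) := by
      calc _ ≤ N ^ (1 / 2 - 11 / 10 * (1 - γ)) * N ^ ((1 + ε) / 2) := by gcongr
        _ = N ^ (1 / 2 - 11 / 10 * (1 - γ) + (1 + ε) / 2) := (Real.rpow_add hN0 _ _).symm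
        _ ≤ _ := Real.rpow_le_rpow_of_exponent_le hN (by linarith)
    have i2 : N ^ (1 - γ / 2) ≤ N ^ (1 - 105 / 100 * (1 - γ)) :=
      Real.rpow_le_rpow_of_exponent_le hN (by linarith)
    have e1 : 2 * M * (Lg * (726 * N ^ ((1 + ε) / 2) + 7 / c0 * N ^ (1 - γ / 2) / y)) =
        (1452 * (y * N ^ ((1 + ε) / 2)) + 14 / c0 * N ^ (1 - γ / 2)) * Lg / d := by
      rw [hy]; field_simp; ring
    rw [e1]
    calc _ ≤ (1452 * N ^ (1 - 105 / 100 * (1 - γ)) + 14 / c0 * N ^ (1 - 105 / 100 * (1 - γ))) * Lg / d := by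
          gcongr
      _ = _ := by ring
  · intro x hx1 hx2
    have hx0 : 0 < x := lt_of_lt_of_le hy0 hx1
    rw [Real.sqrt_mul hlp.le, Real.sqrt_sq hx0.le]
    have e1 : (N / x + 1) * (√l * x) = (N + x) * √l := by field_simp
    rw [e1]
    have j1 : 242 * ((N + x) * √l) ≤ 726 * N ^ ((1 + ε) / 2) := by
      calc 242 * ((N + x) * √l) ≤ 242 * ((N + 2 * N) * N ^ ((-1 + ε) / 2)) := by
            gcongr; linarith
        _ = 726 * (N ^ (1:ℝ) * N ^ ((-1 + ε) / 2)) := by rw [Real.rpow_one]; ring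
        _ = _ := by rw [← Real.rpow_add hN0]; congr 2; ring
    have j2 : 7 / (√l * x) ≤ 7 / c0 * N ^ (1 - γ / 2) / y := by
      have e2 : N ^ (1 - γ / 2) = (N ^ ((γ - 2) / 2))⁻¹ := by
        rw [← Real.rpow_neg hN0.le]; congr 1; ring
      rw [e2]
      calc 7 / (√l * x) ≤ 7 / (c0 * N ^ ((γ - 2) / 2) * y) := by gcongr
        _ = _ := by field_simp
    linarith

lemma exists_Q {x : ℝ} (hx : 1 ≤ x) : ∃ Q : ℕ, 0 < Q ∧ x ≤ Q ∧ (Q : ℝ) ≤ 2 * x := by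
  refine ⟨⌈x⌉₊, Nat.ceil_pos.2 (by linarith), Nat.le_ceil x, ?_⟩
  have := Nat.ceil_lt_add_one (a := x) (by linarith)
  linarith

set_option maxHeartbeats 1000000 in
lemma caseA_bd {t c h γ N Lg M ε K : ℝ} {b : ℕ → ℝ} (hN : 1 ≤ N) (hh : 1 ≤ h) (hγ0 : 865/886 < γ)
    (hγ1 : γ < 1) (hhH : h ≤ N ^ (1 - γ + ε)) (hε0 : 0 < ε) (hε : ε ≤ (1 - γ) / 100)
    (hsc : Scale ((c * (c - 1)) ^ 2) ((γ * (1 - γ)) ^ 2) t c h γ N) (hLg : 0 ≤ Lg) (hK : 0 < K)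
    (hb : ∀ l : ℕ, (l : ℝ) ≤ 2 * N → |b l| ≤ Lg) (hM : 0 < M)
    (d : ℕ) (hd : 0 < d) (a : ℤ) (hda : Int.gcd (d : ℤ) a = 1)
    (hdD : (d : ℝ) ≤ N ^ (21 / 110 - 443 / 55 * (1 - γ)))
    (hMdD : M * d ≤ K * N ^ (5 / 6 - 31 / 3 * (1 - γ)))
    (hMd : N ^ (1 / 2 - 11 / 10 * (1 - γ)) ≤ M * d) :
    Tsum N t c h γ b M d a ≤ (2 * (2 + 4 * K) * (728 + 7 / √((γ * (1 - γ)) ^ 2 / 8))) * Lg *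
      N ^ (1 - 105 / 100 * (1 - γ)) / d := by
  have hN0 : 0 < N := by linarith
  have hd' : (0:ℝ) < d := by exact_mod_cast hd
  have hκ0 : 0 < γ * (1 - γ) := mul_pos (by linarith) (by linarith)
  have hκ : 0 < (γ * (1 - γ)) ^ 2 := by positivity
  have hκ1 : (γ * (1 - γ)) ^ 2 ≤ 1 := by
    have : γ * (1 - γ) ≤ 1 := by nlinarith
    exact pow_le_one₀ hκ0.le this
  set l := lam ((γ * (1 - γ)) ^ 2) h γ N with hl
  have hlp : 0 < l := lam_pos hN hκ (by linarith)
  set c0 := √((γ * (1 - γ)) ^ 2 / 8) with hc0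
  have hc0p : 0 < c0 := Real.sqrt_pos.2 (by positivity)
  set δ := 1 - γ with hδ
  have hδ0 : 0 < δ := by linarith
  have hδ1 : δ < 21 / 886 := by linarith
  have hup : l ≤ N ^ (-1 + ε) := lam_upper hκ hκ1 hN (by linarith) hhH hγ1
  have hlo : (γ * δ) ^ 2 / 8 * N ^ (γ - 2) ≤ l := lam_lower hκ hN hh (by linarith)
  obtain ⟨Q1, hQ1, hQ1a, hQ1b⟩ := exists_Q (Real.one_le_rpow hN (show (0:ℝ) ≤ 12 * δ by linarith))
  obtain ⟨Q2, hQ2, hQ2a, hQ2b⟩ := exists_Q (Real.one_le_rpow hN (show (0:ℝ) ≤ 9 / 2 * δ by linarith))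
  have hQ1' : (0:ℝ) < Q1 := by exact_mod_cast hQ1
  have hQ2' : (0:ℝ) < Q2 := by exact_mod_cast hQ2
  have hy0 : 0 < M * d := by positivity
  -- d ≤ M
  have hdM : (d : ℝ) ≤ M := by
    have h2 : (d : ℝ) * d ≤ M * d := by
      calc (d : ℝ) * d ≤ N ^ (21 / 110 - 443 / 55 * δ) * N ^ (21 / 110 - 443 / 55 * δ) := by gcongr
        _ = N ^ ((21 / 110 - 443 / 55 * δ) + (21 / 110 - 443 / 55 * δ)) := (Real.rpow_add hN0 _ _).symm
        _ ≤ N ^ (1 / 2 - 11 / 10 * δ) := Real.rpow_le_rpow_of_exponent_le hN (by linarith)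
        _ ≤ _ := hMd
    exact le_of_mul_le_mul_right h2 hd'
  have hMd1 : M / d + 1 ≤ 2 * (M / d) := by
    have : 1 ≤ M / d := by rw [le_div_iff₀ hd']; linarith
    linarith
  -- Q1 Q2
  have hQQ : (Q1 : ℝ) * Q2 ≤ 4 * K * (N / (M * d)) := by
    have h1 : (Q1 : ℝ) * Q2 ≤ 4 * N ^ (33 / 2 * δ) := by
      calc (Q1 : ℝ) * Q2 ≤ (2 * N ^ (12 * δ)) * (2 * N ^ (9 / 2 * δ)) := by gcongr
        _ = 4 * (N ^ (12 * δ) * N ^ (9 / 2 * δ)) := by ring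
        _ = _ := by rw [← Real.rpow_add hN0]; congr 2; ring
    refine h1.trans ?_
    have h2 : N ^ (33 / 2 * δ) * (M * d) ≤ K * N := by
      calc N ^ (33 / 2 * δ) * (M * d) ≤ N ^ (33 / 2 * δ) * (K * N ^ (5 / 6 - 31 / 3 * δ)) := by gcongr
        _ = K * (N ^ (33 / 2 * δ) * N ^ (5 / 6 - 31 / 3 * δ)) := by ring
        _ = K * N ^ (33 / 2 * δ + (5 / 6 - 31 / 3 * δ)) := by rw [← Real.rpow_add hN0]
        _ ≤ K * N ^ (1:ℝ) := by
          gcongr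
          linarith
        _ = K * N := by rw [Real.rpow_one]
    rw [← le_div_iff₀ hy0] at h2
    calc 4 * N ^ (33 / 2 * δ) ≤ 4 * (K * N / (M * d)) := by gcongr
      _ = _ := by ring
  set I := ⌊2 * N / (M * d * (Q1 * Q2))⌋₊ + 1 with hI
  have hI1 : 2 * N < M * (d * (Q1 * (Q2 * I))) := by
    have := Nat.lt_floor_add_one (2 * N / (M * d * (Q1 * Q2)))
    rw [div_lt_iff₀ (by positivity)] at this
    rw [hI]; push_cast
    linarith
  have hI2 : (I : ℝ) * (Q1 * Q2) ≤ (2 + 4 * K) * (N / (M * d)) := by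
    have := Nat.floor_le (show 0 ≤ 2 * N / (M * d * (Q1 * Q2)) by positivity)
    rw [hI]; push_cast
    calc _ ≤ (2 * N / (M * d * (Q1 * Q2)) + 1) * (Q1 * Q2) := by gcongr
      _ = 2 * (N / (M * d)) + Q1 * Q2 := by field_simp
      _ ≤ _ := by linarith
  set C1 := 728 + 7 / c0 with hC1
  have hC1p : 1 ≤ C1 := by
    have : 0 < 7 / c0 := by positivity
    linarith
  have main := caseA_T hN (by linarith) (by linarith) hγ1 hsc hLg hb hM d hd a hda Q1 Q2 I hQ1 hQ2 hI1
    (C1 * N ^ (-(105 / 100 * δ))) (by positivity) ?_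
  · refine main.trans ?_
    calc _ ≤ d * (Lg * ((2 * (M / d)) * ((2 + 4 * K) * (N / (M * d)))) * (C1 * N ^ (-(105 / 100 * δ)))) := by
          gcongr
      _ = 2 * (2 + 4 * K) * C1 * Lg * (N * N ^ (-(105 / 100 * δ))) / d := by field_simp
      _ = _ := by
        congr 2
        nth_rewrite 1 [← Real.rpow_one N]
        rw [← Real.rpow_add hN0]; congr 1
  · have hp : (C1 * N ^ (-(105 / 100 * δ))) ^ 4 = C1 ^ 4 * N ^ (-(42 / 10 * δ)) := by
      rw [mul_pow]; congr 1
      rw [← Real.rpow_natCast, ← Real.rpow_mul hN0.le]; congr 1; push_cast; ring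
    rw [hp]
    set W := N ^ (-(42 / 10 * δ)) with hW
    have hW0 : 0 < W := Real.rpow_pos_of_pos hN0 _
    have b1 : 1 / (Q1 : ℝ) ≤ W := by
      calc 1 / (Q1 : ℝ) ≤ 1 / N ^ (12 * δ) := by gcongr
        _ = N ^ (-(12 * δ)) := by rw [Real.rpow_neg hN0.le, one_div]
        _ ≤ W := Real.rpow_le_rpow_of_exponent_le hN (by linarith)
    have b2 : 1 / (Q2 : ℝ) ≤ W := by
      calc 1 / (Q2 : ℝ) ≤ 1 / N ^ (9 / 2 * δ) := by gcongr
        _ = N ^ (-(9 / 2 * δ)) := by rw [Real.rpow_neg hN0.le, one_div]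
        _ ≤ W := Real.rpow_le_rpow_of_exponent_le hN (by linarith)
    have b3 : √(l * (d ^ 4 * (Q1 ^ 2 * Q2))) ≤ 3 * W := by
      rw [Real.sqrt_le_left (by positivity)]
      set A := N ^ (21 / 110 - 443 / 55 * δ) with hA
      calc l * (d ^ 4 * (Q1 ^ 2 * Q2)) ≤
          N ^ (-1 + ε) * (A ^ 4 * ((2 * N ^ (12 * δ)) ^ 2 * (2 * N ^ (9 / 2 * δ)))) := by gcongr
        _ = 8 * (N ^ (-1 + ε) * (A ^ 4 * ((N ^ (12 * δ)) ^ 2 * N ^ (9 / 2 * δ)))) := by ring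
        _ = 8 * N ^ ((-1 + ε) + ((21 / 110 - 443 / 55 * δ) * 4 + ((12 * δ) * 2 + 9 / 2 * δ))) := by
          rw [hA, ← Real.rpow_natCast _ 4, ← Real.rpow_natCast _ 2, ← Real.rpow_mul hN0.le,
            ← Real.rpow_mul hN0.le, ← Real.rpow_add hN0, ← Real.rpow_add hN0, ← Real.rpow_add hN0]
          norm_num
        _ ≤ 8 * N ^ (-(42 / 10 * δ) * 2) := by
          gcongr
          linarith
        _ = 8 * W ^ 2 := by
          rw [hW, ← Real.rpow_natCast _ 2, ← Real.rpow_mul hN0.le]; norm_num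
        _ ≤ 9 * W ^ 2 := by gcongr; norm_num
        _ = _ := by ring
    have b4 : 7 / ((M / d + 1) * √(l * (d ^ 4 * Q1))) ≤ 7 / c0 * W := by
      have s1 : c0 * N ^ ((γ - 2) / 2 + 6 * δ) * d ^ 2 ≤ √(l * (d ^ 4 * Q1)) := by
        apply Real.le_sqrt_of_sq_le
        calc (c0 * N ^ ((γ - 2) / 2 + 6 * δ) * d ^ 2) ^ 2
            = c0 ^ 2 * (N ^ ((γ - 2) / 2 + 6 * δ)) ^ 2 * d ^ 4 := by ring
          _ = (γ * δ) ^ 2 / 8 * (N ^ (γ - 2) * N ^ (12 * δ)) * d ^ 4 := by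
            rw [hc0, Real.sq_sqrt (by positivity), ← Real.rpow_natCast (N ^ _) 2, ← Real.rpow_mul hN0.le,
              ← Real.rpow_add hN0]
            congr 3; push_cast; ring
          _ = ((γ * δ) ^ 2 / 8 * N ^ (γ - 2)) * (d ^ 4 * N ^ (12 * δ)) := by ring
          _ ≤ _ := by gcongr
      have s2 : c0 * N ^ (42 / 10 * δ) ≤ (M / d + 1) * √(l * (d ^ 4 * Q1)) := by
        calc c0 * N ^ (42 / 10 * δ) ≤ c0 * N ^ ((1 / 2 - 11 / 10 * δ) + ((γ - 2) / 2 + 6 * δ)) := by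
              gcongr
              have : γ = 1 - δ := by rw [hδ]; ring
              rw [this]; linarith
          _ = c0 * (N ^ (1 / 2 - 11 / 10 * δ) * N ^ ((γ - 2) / 2 + 6 * δ)) := by
            rw [Real.rpow_add hN0]
          _ ≤ c0 * ((M * d) * N ^ ((γ - 2) / 2 + 6 * δ)) := by gcongr
          _ = (M / d) * (c0 * N ^ ((γ - 2) / 2 + 6 * δ) * d ^ 2) := by field_simp
          _ ≤ _ := by gcongr; linarith
      calc _ ≤ 7 / (c0 * N ^ (42 / 10 * δ)) := by gcongr
        _ = _ := by rw [hW, Real.rpow_neg hN0.le]; field_simp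
    have hC4 : C1 ≤ C1 ^ 4 := le_self_pow₀ hC1p (by norm_num)
    calc _ ≤ W + W + 242 * (3 * W) + 7 / c0 * W := by gcongr
      _ = C1 * W := by rw [hC1]; ring
      _ ≤ _ := by gcongr

open scoped Classical in
lemma big_le (N H D M t c γ : ℝ) (a : ℤ) (am bl : ℕ → ℂ) (cdh : ℕ → ℕ → ℂ) (b : ℕ → ℝ)
    (hbl : ∀ l, bl l = (b l : ℂ)) (ham : ∀ m : ℕ, ‖am m‖ ≤ 1) (hcdh : ∀ d h : ℕ, ‖cdh d h‖ = 1) :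
    ‖∑ m ∈ Finset.Ioc ⌊M⌋₊ ⌊2 * M⌋₊,
            ∑ l ∈ (Finset.Icc 1 ⌊2 * N⌋₊).filter
                (fun l : ℕ => N < ((m * l : ℕ) : ℝ) ∧ ((m * l : ℕ) : ℝ) ≤ 2 * N),
              am m * bl l *
                ∑ h ∈ Finset.Icc 1 ⌊H⌋₊,
                  (∑ d ∈ (Finset.Icc 1 ⌊D⌋₊).filter
                      (fun d : ℕ => Int.gcd (d : ℤ) a = 1 ∧ (d : ℤ) ∣ (((m * l : ℕ) : ℤ) - a)),
                    cdh d h) *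
                  e (t * ((m * l : ℕ) : ℝ) ^ c - (h : ℝ) * ((m * l : ℕ) : ℝ) ^ γ)‖ ≤
    ∑ h ∈ Finset.Icc 1 ⌊H⌋₊, ∑ d ∈ (Finset.Icc 1 ⌊D⌋₊).filter (fun d : ℕ => Int.gcd (d : ℤ) a = 1),
      Tsum N t c h γ b M d a := by
  have key : ∀ m : ℕ, ∑ l ∈ (Finset.Icc 1 ⌊2 * N⌋₊).filter
                (fun l : ℕ => N < ((m * l : ℕ) : ℝ) ∧ ((m * l : ℕ) : ℝ) ≤ 2 * N),
              am m * bl l *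
                ∑ h ∈ Finset.Icc 1 ⌊H⌋₊,
                  (∑ d ∈ (Finset.Icc 1 ⌊D⌋₊).filter
                      (fun d : ℕ => Int.gcd (d : ℤ) a = 1 ∧ (d : ℤ) ∣ (((m * l : ℕ) : ℤ) - a)),
                    cdh d h) *
                  e (t * ((m * l : ℕ) : ℝ) ^ c - (h : ℝ) * ((m * l : ℕ) : ℝ) ^ γ) =
      ∑ h ∈ Finset.Icc 1 ⌊H⌋₊, ∑ d ∈ (Finset.Icc 1 ⌊D⌋₊).filter (fun d : ℕ => Int.gcd (d : ℤ) a = 1),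
        am m * cdh d h *
        ∑ l ∈ (Finset.Icc 1 ⌊2 * N⌋₊).filter (fun l => (d : ℤ) ∣ ((m * l : ℕ) : ℤ) - a),
          Zt N t c h γ b m l := by
    intro m
    have r1 : ∀ h d : ℕ, am m * cdh d h *
        ∑ l ∈ (Finset.Icc 1 ⌊2 * N⌋₊).filter (fun l => (d : ℤ) ∣ ((m * l : ℕ) : ℤ) - a),
          Zt N t c h γ b m l = ∑ l ∈ Finset.Icc 1 ⌊2 * N⌋₊,
          if (d : ℤ) ∣ ((m * l : ℕ) : ℤ) - a then am m * cdh d h * Zt N t c h γ b m l else 0 := by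
      intro h d
      rw [Finset.mul_sum, Finset.sum_filter]
    simp only [r1]
    have r2 : ∀ h : ℕ, ∑ d ∈ (Finset.Icc 1 ⌊D⌋₊).filter (fun d : ℕ => Int.gcd (d : ℤ) a = 1),
        ∑ l ∈ Finset.Icc 1 ⌊2 * N⌋₊,
          (if (d : ℤ) ∣ ((m * l : ℕ) : ℤ) - a then am m * cdh d h * Zt N t c h γ b m l else 0) =
        ∑ l ∈ Finset.Icc 1 ⌊2 * N⌋₊,
        ∑ d ∈ (Finset.Icc 1 ⌊D⌋₊).filter (fun d : ℕ => Int.gcd (d : ℤ) a = 1),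
          (if (d : ℤ) ∣ ((m * l : ℕ) : ℤ) - a then am m * cdh d h * Zt N t c h γ b m l else 0) :=
      fun h => Finset.sum_comm
    simp only [r2]
    rw [Finset.sum_comm, Finset.sum_filter]
    apply Finset.sum_congr rfl
    intro l _
    split_ifs with hP
    · rw [Finset.mul_sum]
      apply Finset.sum_congr rfl
      intro h _
      rw [← Finset.sum_filter, Finset.filter_filter, Finset.sum_mul, Finset.mul_sum]
      apply Finset.sum_congr rfl
      intro d _
      unfold Zt ph
      rw [if_pos hP, hbl]; ring
    · symm
      apply Finset.sum_eq_zero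
      intro h _
      apply Finset.sum_eq_zero
      intro d _
      rw [Zt_zero_of hP]; simp
  simp only [key]
  rw [Finset.sum_comm]
  refine (norm_sum_le _ _).trans (Finset.sum_le_sum fun h _ => ?_)
  rw [Finset.sum_comm]
  refine (norm_sum_le _ _).trans (Finset.sum_le_sum fun d _ => ?_)
  unfold Tsum
  refine (norm_sum_le _ _).trans (Finset.sum_le_sum fun m _ => ?_)
  rw [norm_mul, norm_mul, hcdh, mul_one]
  exact mul_le_of_le_one_left (norm_nonneg _) (ham m)

lemma log_bd {N s : ℝ} (hN : 1 ≤ N) (hs : 0 < s) : 1 + Real.log (2 * N) ≤ (2 + 1 / s) * N ^ s := by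
  rw [Real.log_mul (by norm_num) (by linarith)]
  have h1 := Real.log_le_rpow_div (by linarith : 0 ≤ N) hs
  have h2 := Real.one_le_rpow hN hs.le
  have h3 := Real.log_two_lt_d9
  have : N ^ s / s = 1 / s * N ^ s := by ring
  rw [add_mul, ← this]
  linarith

lemma total_bd {γ : ℝ} (hγ₁ : 865 / 886 < γ) (hγ₂ : γ < 1) {ε : ℝ} (hε : ε ≤ (1 - γ) / 100)
    {N H D Cc : ℝ} (hN : 1 ≤ N) (hH : H = N ^ (1 - γ + ε)) (hDN : D ≤ N) (hCc : 0 ≤ Cc) (a : ℤ)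
    (T : ℕ → ℕ → ℝ)
    (hT : ∀ h ∈ Finset.Icc 1 ⌊H⌋₊, ∀ d ∈ (Finset.Icc 1 ⌊D⌋₊).filter (fun d : ℕ => Int.gcd (d : ℤ) a = 1),
      T h d ≤ Cc * (1 + Real.log (2 * N)) * N ^ (1 - 105 / 100 * (1 - γ)) / d) :
    ∑ h ∈ Finset.Icc 1 ⌊H⌋₊, ∑ d ∈ (Finset.Icc 1 ⌊D⌋₊).filter (fun d : ℕ => Int.gcd (d : ℤ) a = 1),
      T h d ≤ Cc * (2 + 1 / ((1 - γ) / 200)) ^ 2 * N ^ (1 - ε) := by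
  have hN0 : 0 < N := by linarith
  have hlogN : 0 ≤ Real.log (2 * N) := Real.log_nonneg (by linarith)
  set Lg := 1 + Real.log (2 * N) with hLg
  have hLg0 : 0 ≤ Lg := by linarith
  set P := N ^ (1 - 105 / 100 * (1 - γ)) with hP
  have hP0 : 0 < P := Real.rpow_pos_of_pos hN0 _
  have hH0 : 0 < H := by rw [hH]; positivity
  have hharm : ∑ d ∈ (Finset.Icc 1 ⌊D⌋₊).filter (fun d : ℕ => Int.gcd (d : ℤ) a = 1), (1 / (d : ℝ)) ≤ Lg := by
    calc _ ≤ ∑ d ∈ Finset.Icc 1 ⌊D⌋₊, (1 / (d : ℝ)) :=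
          Finset.sum_le_sum_of_subset_of_nonneg (Finset.filter_subset _ _) (fun _ _ _ => by positivity)
      _ = ((harmonic ⌊D⌋₊ : ℚ) : ℝ) := by
          rw [harmonic_eq_sum_Icc]; push_cast; simp
      _ ≤ 1 + Real.log ⌊D⌋₊ := harmonic_le_one_add_log _
      _ ≤ _ := by
        rw [hLg]
        rcases Nat.eq_zero_or_pos ⌊D⌋₊ with h0 | h0
        · rw [h0]; simp; exact hlogN
        · have h1 : (0:ℝ) < ⌊D⌋₊ := by exact_mod_cast h0
          have hD1 : 0 ≤ D := by
            by_contra hneg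
            rw [Nat.floor_of_nonpos (by linarith)] at h0
            exact lt_irrefl _ h0
          have h2 := Nat.floor_le hD1
          have := Real.log_le_log h1 (show (⌊D⌋₊ : ℝ) ≤ 2 * N by linarith)
          linarith
  have hinner : ∀ h ∈ Finset.Icc 1 ⌊H⌋₊,
      ∑ d ∈ (Finset.Icc 1 ⌊D⌋₊).filter (fun d : ℕ => Int.gcd (d : ℤ) a = 1), T h d ≤ Cc * Lg * P * Lg := by
    intro h hh
    calc _ ≤ ∑ d ∈ (Finset.Icc 1 ⌊D⌋₊).filter (fun d : ℕ => Int.gcd (d : ℤ) a = 1),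
          Cc * Lg * P * (1 / (d : ℝ)) := by
          apply Finset.sum_le_sum
          intro d hd
          refine (hT h hh d hd).trans (le_of_eq ?_)
          ring
      _ ≤ _ := by
        rw [← Finset.mul_sum]
        gcongr
  have hs : 0 < (1 - γ) / 200 := by linarith
  have hLb := log_bd hN hs
  rw [← hLg] at hLb
  set s := (1 - γ) / 200 with hsdef
  calc _ ≤ ∑ h ∈ Finset.Icc 1 ⌊H⌋₊, Cc * Lg * P * Lg := Finset.sum_le_sum hinner
    _ = ⌊H⌋₊ * (Cc * Lg * P * Lg) := by simp
    _ ≤ H * (Cc * ((2 + 1 / s) * N ^ s) * P * ((2 + 1 / s) * N ^ s)) := by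
      gcongr
      exact Nat.floor_le hH0.le
    _ = Cc * (2 + 1 / s) ^ 2 * (H * (N ^ s * (P * N ^ s))) := by ring
    _ ≤ _ := by
      gcongr
      rw [hH, hP, ← Real.rpow_add hN0, ← Real.rpow_add hN0, ← Real.rpow_add hN0]
      apply Real.rpow_le_rpow_of_exponent_le hN
      rw [hsdef]; linarith

open scoped Classical in
/-- Type I estimate (Lemma 8): with `θ = (443/55)γ - 173/22 - ε`, `X^{1-ε} ≤ N ≤ X`,
`H = N^{1-γ+ε}`, `N^θ ≤ D ≤ N^{θ+ε/2}`, `|t| ≤ X^{1/4-c}`, coefficients `|a(m)| ≤ 1`,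
`b(l) = 1` or `b(l) = log l`, `|c(d,h)| = 1`, and `M ≪ N^{(31/3)γ - 19/2 - θ - ε}`,
the Type I sum `S_I = ∑_{m ∼ M} ∑_{N < ml ≤ 2N} a(m) b(l) G(ml)` satisfies
`S_I ≪ N^{1-ε}`, where `G(n) = ∑_{1 ≤ h ≤ H} F_h(n) e(tn^c - hn^γ)` and
`F_h(n) = ∑_{d ≤ D, (d,a)=1, d ∣ n-a} c(d,h)`. -/
theorem type_I_estimate (γ : ℝ) (hγ₁ : 865 / 886 < γ) (hγ₂ : γ < 1)
    (a : ℤ) (ha : a ≠ 0) (c : ℝ) (hc₁ : 1 < c) (hc₂ : c < 3) (hc₃ : c ≠ 2) :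
    ∃ ε₀ : ℝ, 0 < ε₀ ∧ ∀ ε : ℝ, 0 < ε → ε < ε₀ → ∀ K : ℝ, 0 < K →
      ∃ C : ℝ, 0 < C ∧ ∃ X₀ : ℝ, ∀ X : ℝ, X₀ ≤ X →
      ∀ N H D M t : ℝ, ∀ am bl : ℕ → ℂ, ∀ cdh : ℕ → ℕ → ℂ,
        X ^ (1 - ε) ≤ N → N ≤ X →
        H = N ^ (1 - γ + ε) →
        N ^ ((443 / 55) * γ - 173 / 22 - ε) ≤ D →
        D ≤ N ^ ((443 / 55) * γ - 173 / 22 - ε + ε / 2) →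
        |t| ≤ X ^ ((1 : ℝ) / 4 - c) →
        (∀ m : ℕ, ‖am m‖ ≤ 1) →
        ((∀ l : ℕ, bl l = 1) ∨ (∀ l : ℕ, bl l = (Real.log l : ℂ))) →
        (∀ d h : ℕ, ‖cdh d h‖ = 1) →
        0 < M → M ≤ K * N ^ ((31 / 3) * γ - 19 / 2 - ((443 / 55) * γ - 173 / 22 - ε) - ε) →
        ‖∑ m ∈ Finset.Ioc ⌊M⌋₊ ⌊2 * M⌋₊,
            ∑ l ∈ (Finset.Icc 1 ⌊2 * N⌋₊).filter
                (fun l : ℕ => N < ((m * l : ℕ) : ℝ) ∧ ((m * l : ℕ) : ℝ) ≤ 2 * N),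
              am m * bl l *
                ∑ h ∈ Finset.Icc 1 ⌊H⌋₊,
                  (∑ d ∈ (Finset.Icc 1 ⌊D⌋₊).filter
                      (fun d : ℕ => Int.gcd (d : ℤ) a = 1 ∧ (d : ℤ) ∣ (((m * l : ℕ) : ℤ) - a)),
                    cdh d h) *
                  e (t * ((m * l : ℕ) : ℝ) ^ c - (h : ℝ) * ((m * l : ℕ) : ℝ) ^ γ)‖
        ≤ C * N ^ (1 - ε) := by
  have hδ : 0 < 1 - γ := by linarith
  have hκ1 : 0 < c * (c - 1) := mul_pos (by linarith) (by linarith)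
  have hκ2 : 0 < γ * (1 - γ) := mul_pos (by linarith) hδ
  refine ⟨(1 - γ) / 100, by linarith, ?_⟩
  intro ε hε0 hε1 K hK
  set CA := 2 * (2 + 4 * K) * (728 + 7 / √((γ * (1 - γ)) ^ 2 / 8)) with hCA
  set CC := 1452 + 14 / √(γ * (1 - γ) / 8) with hCC
  have hCA0 : 0 < CA := by positivity
  have hCC0 : 0 < CC := by positivity
  refine ⟨(CA + CC) * (2 + 1 / ((1 - γ) / 200)) ^ 2, by positivity,
    1 + (64 * (c * (c - 1)) / (γ * (1 - γ))) ^ 2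
      + (64 * (c * (c - 1)) ^ 2 / (γ * (1 - γ)) ^ 2) ^ 2, ?_⟩
  intro X hX N H D M t am bl cdh hXN hNX hH hD1 hD2 ht ham hbl hcdh hM0 hMK
  have q1 : 0 ≤ (64 * (c * (c - 1)) / (γ * (1 - γ))) ^ 2 := by positivity
  have q2 : 0 ≤ (64 * (c * (c - 1)) ^ 2 / (γ * (1 - γ)) ^ 2) ^ 2 := by positivity
  have hX1 : 1 ≤ X := by linarith
  have hN1 : 1 ≤ N := le_trans (Real.one_le_rpow hX1 (by linarith)) hXN
  have hN0 : 0 < N := by linarith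
  have hlogN : 0 ≤ Real.log (2 * N) := Real.log_nonneg (by linarith)
  obtain ⟨b, hb1, hb2, hb3, hb4⟩ : ∃ b : ℕ → ℝ, (∀ l, bl l = (b l : ℂ)) ∧ (∀ l, 0 ≤ b l) ∧
      Monotone b ∧ ∀ l : ℕ, (l : ℝ) ≤ 2 * N → |b l| ≤ 1 + Real.log (2 * N) := by
    rcases hbl with h1 | h1
    · refine ⟨fun _ => 1, by simpa using h1, fun _ => by norm_num, fun _ _ _ => le_rfl, ?_⟩
      intro l _
      simp only [abs_one]; linarith
    · refine ⟨fun l => Real.log l, h1, fun l => Real.log_natCast_nonneg l, ?_, ?_⟩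
      · intro x y hxy
        rcases Nat.eq_zero_or_pos x with h0 | h0
        · simp only [h0, Nat.cast_zero, Real.log_zero]; exact Real.log_natCast_nonneg y
        · exact Real.log_le_log (by exact_mod_cast h0) (by exact_mod_cast hxy)
      · intro l hl
        rw [abs_of_nonneg (Real.log_natCast_nonneg l)]
        rcases Nat.eq_zero_or_pos l with h0 | h0
        · rw [h0]; simp; linarith
        · have := Real.log_le_log (by exact_mod_cast h0) hl
          linarith
  have hDe : D ≤ N ^ (21 / 110 - 443 / 55 * (1 - γ)) :=
    hD2.trans (Real.rpow_le_rpow_of_exponent_le hN1 (by linarith))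
  have hDN : D ≤ N := hDe.trans (by
    calc N ^ (21 / 110 - 443 / 55 * (1 - γ)) ≤ N ^ (1:ℝ) :=
          Real.rpow_le_rpow_of_exponent_le hN1 (by linarith)
      _ = N := Real.rpow_one N)
  refine (big_le N H D M t c γ a am bl cdh b hb1 ham hcdh).trans ?_
  refine le_trans (le_of_eq ?_) (total_bd hγ₁ hγ₂ hε1.le hN1 hH hDN (by positivity) a
    (fun h d => Tsum N t c h γ b M d a) ?_)
  · congr!
  intro h hh d hd
  have hLg : 0 ≤ 1 + Real.log (2 * N) := by linarith
  have hh1 : (1 : ℝ) ≤ h := by exact_mod_cast (Finset.mem_Icc.1 hh).1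
  have hH0 : 0 < H := by rw [hH]; positivity
  have hh2 : (h : ℝ) ≤ N ^ (1 - γ + ε) := by
    rw [← hH]
    exact (Nat.le_floor_iff hH0.le).1 (Finset.mem_Icc.1 hh).2
  rw [Finset.mem_filter, Finset.mem_Icc] at hd
  obtain ⟨⟨hd1, hd2⟩, hda⟩ := hd
  have hd' : (0 : ℝ) < d := by exact_mod_cast hd1
  have hD0 : 0 ≤ D := le_trans (by positivity) hD1
  have hdD : (d : ℝ) ≤ D := (Nat.le_floor_iff hD0).1 hd2
  have hMd : M * d ≤ K * N ^ (5 / 6 - 31 / 3 * (1 - γ)) := by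
    calc M * d ≤ (K * N ^ ((31 / 3) * γ - 19 / 2 - ((443 / 55) * γ - 173 / 22 - ε) - ε)) *
          N ^ ((443 / 55) * γ - 173 / 22 - ε + ε / 2) := by
          have := hdD.trans hD2
          gcongr
      _ = K * N ^ ((31 / 3) * γ - 19 / 2 - ((443 / 55) * γ - 173 / 22 - ε) - ε +
          ((443 / 55) * γ - 173 / 22 - ε + ε / 2)) := by rw [mul_assoc, ← Real.rpow_add hN0]
      _ ≤ _ := by
        apply mul_le_mul_of_nonneg_left _ hK.le
        exact Real.rpow_le_rpow_of_exponent_le hN1 (by linarith)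
  have hsc1 : Scale (c * (c - 1)) (γ * (1 - γ)) t c h γ N :=
    scale_of hκ1 hκ2 hc₁ hc₂ (by linarith) hγ₂ hε0 (by linarith) hX1 (by linarith) hXN hNX ht hh1
  have hsc2 : Scale ((c * (c - 1)) ^ 2) ((γ * (1 - γ)) ^ 2) t c h γ N :=
    scale_of (by positivity) (by positivity) hc₁ hc₂ (by linarith) hγ₂ hε0 (by linarith) hX1
      (by linarith) hXN hNX ht hh1
  have hP0 : 0 < N ^ (1 - 105 / 100 * (1 - γ)) := Real.rpow_pos_of_pos hN0 _
  rcases le_total (M * d) (N ^ (1 / 2 - 11 / 10 * (1 - γ))) with hcase | hcase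
  · refine (caseC_bd hN1 hh1 hγ₁ hγ₂ hh2 hε0 hε1.le hsc1 hLg hb4 hb2 hb3 hM0 d hd1 a hda hcase).trans ?_
    rw [← hCC]
    gcongr
    linarith
  · refine (caseA_bd hN1 hh1 hγ₁ hγ₂ hh2 hε0 hε1.le hsc2 hLg hK hb4 hM0 d hd1 a hda
      (hdD.trans hDe) hMd hcase).trans ?_
    rw [← hCA]
    gcongr
    linarith
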